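/- The set of pairs of integers (n,m) with n ≥ 2, m ≥ 2 and F_n - T_m = 0 is exactly {(2,2), (3,3), (7,6)}; that is, 0 = 1 - 1 = 2 - 2 = 13 - 13 are the only representations of 0 as a difference of a Fibonacci and a Tribonacci number with indices at least 2. -/

import Mathlib

/-- The Tribonacci sequence: T 0 = 0, T 1 = T 2 = 1,
    T (k+3) = T (k+2) + T (k+1) + T k. -/
def trib : ℕ → ℤ
  | 0 => 0
  | 1 => 1
  | 2 => 1
  | n + 3 => trib (n + 2) + trib (n + 1) + trib n

/-!
Let `φ` be the golden ratio and `τ` the Tribonacci constant. By Binet's formulas an equality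
`F n = T m` makes the linear form `log α + n log φ - m log τ`, with `α` the quotient of the leading
constants, exponentially small in `m`. The method of Gelfond and Baker shows that it cannot be that
small once `m` is large: Siegel's lemma provides small integer coefficients, not all zero, for a sum
of exponentials of the monomials `φ⁻ᵃ τᵇ αᶜ` that vanishes to high order at many integers. Since
`log α` is almost a combination of `log φ` and `log τ`, only derivatives in two directions are
needed, and the maximum principle, combined with the fact that a nonzero algebraic integer with
bounded conjugates is not small, extrapolates the zeros to more and more integers. The monomials are
pairwise distinct, so in the end a Vandermonde determinant forces all coefficients to vanish.

This bounds `m` by `2 ^ 1100`. A Baker–Davenport reduction with a convergent to `log φ / log τ`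
lowers the bound to `1320`, and the remaining indices are compared one by one.
-/

open Finset Polynomial
open scoped goldenRatio IntermediateField

/-! ### Entire functions with many zeros -/

lemma exists_differentiable_eq_pow_mul {g : ℂ → ℂ} (hg : Differentiable ℂ g) {a : ℂ} {k : ℕ}
    (hk : (k : ℕ∞) ≤ analyticOrderAt g a) :
    ∃ h : ℂ → ℂ, Differentiable ℂ h ∧ ∀ z, g z = (z - a) ^ k * h z := by
  induction k generalizing g with
  | zero => exact ⟨g, hg, fun z => by simp⟩
  | succ k ih =>
    have hga : g a = 0 := by
      refine apply_eq_zero_of_analyticOrderAt_ne_zero fun h0 => ?_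
      simp [h0] at hk
    have hslope : Differentiable ℂ (dslope g a) := differentiableOn_univ.1 <|
      (Complex.differentiableOn_dslope Filter.univ_mem).2 hg.differentiableOn
    have hfactor : g = (fun z => z - a) * dslope g a := by
      funext z
      simpa [hga] using (sub_smul_dslope g a z).symm
    have horder : analyticOrderAt (fun z : ℂ => z - a) a = (1 : ℕ) :=
      ((by fun_prop : AnalyticAt ℂ (fun z => z - a) a).analyticOrderAt_eq_natCast).2
        ⟨fun _ => 1, by fun_prop, by simp, by simp⟩
    rw [hfactor, analyticOrderAt_mul (by fun_prop) (hslope.analyticAt a), horder, add_comm k,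
      Nat.cast_add, ENat.add_le_add_iff_left (ENat.natCast_ne_top 1)] at hk
    obtain ⟨h, hh, hgh⟩ := ih hslope hk
    refine ⟨h, hh, fun z => ?_⟩
    rw [hfactor, Pi.mul_apply, hgh z]
    ring

lemma exists_differentiable_eq_prod_pow_mul {h : ℂ → ℂ} (hh : Differentiable ℂ h) {S : Finset ℂ}
    {k : ℕ} (hz : ∀ s ∈ S, ∀ i < k, iteratedDeriv i h s = 0) :
    ∃ g : ℂ → ℂ, Differentiable ℂ g ∧ ∀ z, h z = (∏ s ∈ S, (z - s) ^ k) * g z := by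
  induction S using Finset.induction_on with
  | empty => exact ⟨h, hh, fun z => by simp⟩
  | insert a S ha ih =>
    obtain ⟨g, hg, hgz⟩ := ih fun s hs => hz s (mem_insert_of_mem hs)
    have hprod : Differentiable ℂ (fun z : ℂ => ∏ s ∈ S, (z - s) ^ k) := by fun_prop
    have hprod_order : analyticOrderAt (fun z : ℂ => ∏ s ∈ S, (z - s) ^ k) a = 0 := by
      rw [(hprod.analyticAt _).analyticOrderAt_eq_zero, prod_ne_zero_iff]
      exact fun s hs => pow_ne_zero _ (sub_ne_zero.2 fun h => ha (h ▸ hs))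
    have horder : (k : ℕ∞) ≤ analyticOrderAt g a := by
      have hka : (k : ℕ∞) ≤ analyticOrderAt h a :=
        (natCast_le_analyticOrderAt_iff_iteratedDeriv_eq_zero (hh.analyticAt _)).2
          (hz a (mem_insert_self a S))
      rwa [show h = (fun z : ℂ => ∏ s ∈ S, (z - s) ^ k) * g from funext hgz,
        analyticOrderAt_mul (hprod.analyticAt _) (hg.analyticAt _), hprod_order, zero_add] at hka
    obtain ⟨f, hf, hgf⟩ := exists_differentiable_eq_pow_mul hg horder
    refine ⟨f, hf, fun z => ?_⟩
    rw [hgz z, hgf z, prod_insert ha]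
    ring

lemma norm_le_pow_mul_of_iteratedDeriv_eq_zero {h : ℂ → ℂ} (hh : Differentiable ℂ h)
    {S : Finset ℂ} {k : ℕ} (hz : ∀ s ∈ S, ∀ i < k, iteratedDeriv i h s = 0) {R ρ M : ℝ}
    (hR : 0 < R) (hM : ∀ z, ‖z‖ ≤ R → ‖h z‖ ≤ M) {a : ℂ} (ha : ‖a‖ ≤ R)
    (hS : ∀ s ∈ S, ‖s‖ < R ∧ ‖a - s‖ ≤ ρ * (R - ‖s‖)) :
    ‖h a‖ ≤ ρ ^ (#S * k) * M := by
  obtain ⟨g, hg, hgz⟩ := exists_differentiable_eq_prod_pow_mul hh hz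
  have hD : 0 < ∏ s ∈ S, (R - ‖s‖) ^ k :=
    prod_pos fun s hs => pow_pos (sub_pos.2 (hS s hs).1) k
  have hga : ‖g a‖ ≤ M / ∏ s ∈ S, (R - ‖s‖) ^ k := by
    refine Complex.norm_le_of_forall_mem_frontier_norm_le Metric.isBounded_ball
      (hg.diffContOnCl (s := Metric.ball 0 R)) (fun w hw => ?_) ?_
    · rw [frontier_ball (0 : ℂ) hR.ne', mem_sphere_zero_iff_norm] at hw
      have hprod : ∏ s ∈ S, (R - ‖s‖) ^ k ≤ ∏ s ∈ S, ‖(w - s) ^ k‖ := by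
        refine prod_le_prod (fun s hs => (pow_pos (sub_pos.2 (hS s hs).1) k).le) fun s hs => ?_
        rw [norm_pow, ← hw]
        have := (hS s hs).1
        exact pow_le_pow_left₀ (by linarith) (norm_sub_norm_le w s) k
      have hMw := hM w hw.le
      rw [hgz w, norm_mul, norm_prod, mul_comm] at hMw
      rw [le_div_iff₀ hD]
      exact (mul_le_mul_of_nonneg_left hprod (norm_nonneg _)).trans hMw
    · rw [closure_ball (0 : ℂ) hR.ne', mem_closedBall_zero_iff]
      exact ha
  have hprod : ∏ s ∈ S, ‖(a - s) ^ k‖ ≤ ρ ^ (#S * k) * ∏ s ∈ S, (R - ‖s‖) ^ k := by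
    rw [mul_comm #S, pow_mul, ← prod_const, ← prod_mul_distrib]
    refine prod_le_prod (fun s _ => norm_nonneg _) fun s hs => ?_
    rw [norm_pow, ← mul_pow]
    exact pow_le_pow_left₀ (norm_nonneg _) (hS s hs).2 k
  calc ‖h a‖ = (∏ s ∈ S, ‖(a - s) ^ k‖) * ‖g a‖ := by rw [hgz a, norm_mul, norm_prod]
    _ ≤ (ρ ^ (#S * k) * ∏ s ∈ S, (R - ‖s‖) ^ k) * (M / ∏ s ∈ S, (R - ‖s‖) ^ k) :=
        mul_le_mul hprod hga (norm_nonneg _) ((prod_nonneg fun s _ => norm_nonneg _).trans hprod)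
    _ = ρ ^ (#S * k) * M := by field_simp

/-! ### Hermite interpolation at integers -/

section Hermite

variable {ι : Type*} [Fintype ι] [DecidableEq ι]

lemma abs_adjugate_le {A : Matrix ι ι ℤ} {B : ℤ} (hB : 1 ≤ B) (hA : ∀ i j, |A i j| ≤ B) (i j : ι) :
    |A.adjugate i j| ≤ (Fintype.card ι).factorial * B ^ Fintype.card ι := by
  rw [Matrix.adjugate_apply, ← nsmul_eq_mul]
  refine Matrix.det_le (abv := AbsoluteValue.abs) fun k l => ?_
  rw [AbsoluteValue.abs_apply, Matrix.updateRow_apply, Pi.single_apply]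
  split_ifs
  · simpa using hB
  · simpa using zero_le_one.trans hB
  · exact hA k l

lemma exists_mulVec_eq_of_det_ne_zero {A : Matrix ι ι ℤ} (hdet : A.det ≠ 0) {B : ℤ} (hB : 1 ≤ B)
    (hA : ∀ i j, |A i j| ≤ B) {y : ι → ℂ} {ε : ℝ} (hy : ∀ i, ‖y i‖ ≤ ε) :
    ∃ x : ι → ℂ, (A.map (Int.castRingHom ℂ)).mulVec x = y ∧
      ∀ i, ‖x i‖ ≤ Fintype.card ι * ((Fintype.card ι).factorial * B ^ Fintype.card ι * ε) := by
  have hcast : (A.map (Int.castRingHom ℂ)).det = A.det := (Int.cast_det A).symm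
  have hdet' : (A.det : ℂ) ≠ 0 := Int.cast_ne_zero.2 hdet
  refine ⟨(A.det : ℂ)⁻¹ • (A.map (Int.castRingHom ℂ)).adjugate.mulVec y, ?_, fun i => ?_⟩
  · rw [Matrix.mulVec_smul, Matrix.mulVec_mulVec, Matrix.mul_adjugate, hcast, Matrix.smul_mulVec,
      Matrix.one_mulVec, smul_smul, inv_mul_cancel₀ hdet', one_smul]
  · have hadj : ∀ j, ‖(A.map (Int.castRingHom ℂ)).adjugate i j‖ ≤
        (Fintype.card ι).factorial * B ^ Fintype.card ι := fun j => by
      have hmap := congrFun₂ ((Int.castRingHom ℂ).map_adjugate A) i j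
      rw [RingHom.mapMatrix_apply, RingHom.mapMatrix_apply, Matrix.map_apply] at hmap
      rw [← hmap, eq_intCast, Complex.norm_intCast]
      exact_mod_cast abs_adjugate_le hB hA i j
    have hnum : ‖(A.map (Int.castRingHom ℂ)).adjugate.mulVec y i‖ ≤
        Fintype.card ι * ((Fintype.card ι).factorial * B ^ Fintype.card ι * ε) := by
      refine (norm_sum_le_of_le (n := fun _ => (Fintype.card ι).factorial *
        (B : ℝ) ^ Fintype.card ι * ε) _ fun j _ => ?_).trans_eq (by simp)
      rw [norm_mul]
      exact mul_le_mul (hadj j) (hy j) (norm_nonneg _) ((norm_nonneg _).trans (hadj j))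
    have hone : 1 ≤ ‖(A.det : ℂ)‖ := by
      rw [Complex.norm_intCast]
      exact_mod_cast Int.one_le_abs hdet
    rw [Pi.smul_apply, norm_smul, norm_inv]
    exact (mul_le_of_le_one_left (norm_nonneg _) (inv_le_one_of_one_le₀ hone)).trans hnum

end Hermite

/-- The confluent Vandermonde matrix of the nodes `0, …, L - 1`, each of multiplicity `k`: applied
to the coefficients of a polynomial of degree `< L * k` it returns the derivatives of order `< k`
at these nodes, the row `finProdFinEquiv (s, i)` giving the `i`-th derivative at `s`. -/
def confluentVandermonde (L k : ℕ) : Matrix (Fin (L * k)) (Fin (L * k)) ℤ :=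
  fun r d => (d : ℕ).descFactorial r.modNat * (r.divNat : ℕ) ^ ((d : ℕ) - r.modNat)

lemma eval_iterate_derivative_ofFn {R : Type*} [CommRing R] [DecidableEq R] {L k : ℕ}
    (v : Fin (L * k) → R) {s i : ℕ} (hs : s < L) (hi : i < k) :
    (derivative^[i] (ofFn (L * k) v)).eval (s : R) =
      ((confluentVandermonde L k).map (Int.castRingHom R)).mulVec v
        (finProdFinEquiv (⟨s, hs⟩, ⟨i, hi⟩)) := by
  have hr := finProdFinEquiv.symm_apply_apply ((⟨s, hs⟩, ⟨i, hi⟩) : Fin L × Fin k)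
  have hs' : (finProdFinEquiv (⟨s, hs⟩, ⟨i, hi⟩)).divNat = ⟨s, hs⟩ := congrArg Prod.fst hr
  have hi' : (finProdFinEquiv (⟨s, hs⟩, ⟨i, hi⟩)).modNat = ⟨i, hi⟩ := congrArg Prod.snd hr
  rw [ofFn_eq_sum_monomial, iterate_derivative_sum, eval_finsetSum]
  refine sum_congr rfl fun d _ => ?_
  rw [← C_mul_X_pow_eq_monomial, iterate_derivative_C_mul,
    iterate_derivative_X_pow_eq_natCast_mul]
  simp only [confluentVandermonde, hs', hi', eval_mul, eval_C, eval_natCast, eval_pow, eval_X,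
    Matrix.map_apply, eq_intCast, Int.cast_mul, Int.cast_pow, Int.cast_natCast]
  ring

lemma card_mul_le_natDegree_of_iterate_derivative_eval_eq_zero {K : Type*} [Field K] [CharZero K]
    {p : K[X]} (hp : p ≠ 0) {S : Finset K} {k : ℕ}
    (hz : ∀ s ∈ S, ∀ i < k, (derivative^[i] p).eval s = 0) : #S * k ≤ p.natDegree := by
  classical
  have hroots : k • S.val ≤ p.roots := by
    refine Multiset.le_iff_count.2 fun s => ?_
    rw [Multiset.count_nsmul, count_roots]
    by_cases hs : s ∈ S
    · rw [Multiset.count_eq_one_of_mem S.nodup hs]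
      rcases k with _ | k
      · simp
      · simpa using lt_rootMultiplicity_of_isRoot_iterate_derivative hp
          fun m hm => hz s hs m (Nat.lt_succ_of_le hm)
    · rw [Multiset.count_eq_zero_of_notMem hs]
      simp
  calc #S * k = Multiset.card (k • S.val) := by simp [mul_comm]
    _ ≤ Multiset.card p.roots := Multiset.card_le_card hroots
    _ ≤ p.natDegree := p.card_roots'

lemma det_confluentVandermonde_ne_zero (L k : ℕ) : (confluentVandermonde L k).det ≠ 0 := by
  intro hdet
  have hdetℚ : ((confluentVandermonde L k).map (Int.castRingHom ℚ)).det = 0 :=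
    (Int.cast_det _).symm.trans (by rw [hdet, Int.cast_zero])
  obtain ⟨v, hv, hVv⟩ := Matrix.exists_mulVec_eq_zero_iff.2 hdetℚ
  have hp : ofFn (L * k) v ≠ 0 := fun h => hv (injective_ofFn _ (h.trans (map_zero _).symm))
  have hpos : 1 ≤ L * k := Nat.one_le_iff_ne_zero.2 (ne_zero_of_ofFn_ne_zero hp)
  have hle : #((range L).map (Nat.castEmbedding (R := ℚ))) * k ≤ (ofFn (L * k) v).natDegree := by
    refine card_mul_le_natDegree_of_iterate_derivative_eval_eq_zero hp fun s hs i hi => ?_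
    obtain ⟨s, hsL, rfl⟩ := mem_map.1 hs
    have hrow := eval_iterate_derivative_ofFn v (mem_range.1 hsL) hi
    rwa [hVv] at hrow
  rw [card_map, card_range] at hle
  exact (ofFn_natDegree_lt hpos v).not_ge hle

lemma abs_confluentVandermonde_le (L k : ℕ) (r d : Fin (L * k)) :
    |confluentVandermonde L k r d| ≤ ((L * k : ℕ) : ℤ) ^ (L * k) := by
  have hpos : 0 < L * k := r.pos
  have hL : L ≤ L * k := Nat.le_mul_of_pos_right L (Nat.pos_of_mul_pos_left hpos)
  rw [confluentVandermonde, abs_of_nonneg (by positivity)]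
  norm_cast
  rcases lt_or_ge (d : ℕ) r.modNat with hd | hd
  · rw [Nat.descFactorial_of_lt hd, zero_mul]
    exact Nat.zero_le _
  calc (d : ℕ).descFactorial r.modNat * (r.divNat : ℕ) ^ ((d : ℕ) - r.modNat)
      ≤ (L * k) ^ (r.modNat : ℕ) * (L * k) ^ ((d : ℕ) - r.modNat) :=
        Nat.mul_le_mul ((Nat.descFactorial_le_pow _ _).trans (Nat.pow_le_pow_left d.2.le _))
          (Nat.pow_le_pow_left (r.divNat.2.le.trans hL) _)
    _ = (L * k) ^ (d : ℕ) := by rw [← pow_add, Nat.add_sub_cancel' hd]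
    _ ≤ (L * k) ^ (L * k) := Nat.pow_le_pow_right hpos d.2.le

lemma norm_eval_ofFn_le {n D : ℕ} (hD : 0 < D) (hnD : n ≤ D) {x : Fin n → ℂ} {c : ℝ}
    (hc : 0 ≤ c) (hx : ∀ d, ‖x d‖ ≤ c) {z : ℂ} (hz : ‖z‖ ≤ D) :
    ‖(ofFn n x).eval z‖ ≤ (D : ℝ) ^ (n + 1) * c := by
  have hD1 : (1 : ℝ) ≤ D := by exact_mod_cast hD
  have hterm : ∀ d : Fin n, ‖x d * z ^ (d : ℕ)‖ ≤ c * (D : ℝ) ^ n := fun d => by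
    rw [norm_mul, norm_pow]
    exact mul_le_mul (hx d) ((pow_le_pow_left₀ (norm_nonneg z) hz d).trans
      (pow_le_pow_right₀ hD1 d.2.le)) (by positivity) hc
  calc ‖(ofFn n x).eval z‖ = ‖∑ d : Fin n, x d * z ^ (d : ℕ)‖ := by
        simp only [ofFn_eq_sum_monomial, eval_finsetSum, eval_monomial]
    _ ≤ n * (c * (D : ℝ) ^ n) := (norm_sum_le_of_le _ fun d _ => hterm d).trans_eq (by simp)
    _ ≤ D * (c * (D : ℝ) ^ n) := by gcongr
    _ = (D : ℝ) ^ (n + 1) * c := by ring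

lemma exists_polynomial_iterate_derivative_eval_eq {L k D : ℕ} (hpos : 0 < L * k)
    (hD : L * k ≤ D) {y : ℕ → ℕ → ℂ} {ε : ℝ} (hy : ∀ s < L, ∀ i < k, ‖y s i‖ ≤ ε) :
    ∃ p : ℂ[X], (∀ s < L, ∀ i < k, (derivative^[i] p).eval (s : ℂ) = y s i) ∧
      ∀ z : ℂ, ‖z‖ ≤ D → ‖p.eval z‖ ≤ (D : ℝ) ^ (5 * (L * k) ^ 2) * ε := by
  obtain ⟨x, hx, hxε⟩ := exists_mulVec_eq_of_det_ne_zero (det_confluentVandermonde_ne_zero L k)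
    (one_le_pow₀ (by exact_mod_cast hpos)) (abs_confluentVandermonde_le L k)
    (y := fun r => y r.divNat r.modNat) fun r => hy _ r.divNat.2 _ r.modNat.2
  rw [Fintype.card_fin] at hxε
  refine ⟨ofFn (L * k) x, fun s hs i hi => ?_, fun z hz => ?_⟩
  · have hr := finProdFinEquiv.symm_apply_apply ((⟨s, hs⟩, ⟨i, hi⟩) : Fin L × Fin k)
    rw [eval_iterate_derivative_ofFn x hs hi, hx]
    exact congrArg (fun q : Fin L × Fin k => y q.1 q.2) hr
  have hε : 0 ≤ ε := (norm_nonneg _).trans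
    (hy 0 (Nat.pos_of_mul_pos_right hpos) 0 (Nat.pos_of_mul_pos_left hpos))
  clear hx
  generalize L * k = n at *
  have hD1 : (1 : ℝ) ≤ D := by exact_mod_cast hpos.trans_le hD
  have hfac : (n.factorial : ℝ) ≤ (D : ℝ) ^ n := by
    exact_mod_cast (Nat.factorial_le_pow n).trans (Nat.pow_le_pow_left hD n)
  have hcoeff : ∀ d, ‖x d‖ ≤ (D : ℝ) ^ (n ^ 2 + n + 1) * ε := fun d => calc
    ‖x d‖ ≤ n * (n.factorial * ((n : ℝ) ^ n) ^ n * ε) := by exact_mod_cast hxε d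
    _ ≤ D * ((D : ℝ) ^ n * ((D : ℝ) ^ n) ^ n * ε) := by gcongr
    _ = (D : ℝ) ^ (n ^ 2 + n + 1) * ε := by ring
  calc ‖(ofFn n x).eval z‖ ≤ (D : ℝ) ^ (n + 1) * ((D : ℝ) ^ (n ^ 2 + n + 1) * ε) :=
        norm_eval_ofFn_le (hpos.trans_le hD) hD (by positivity) hcoeff hz
    _ = (D : ℝ) ^ (n ^ 2 + 2 * n + 2) * ε := by ring
    _ ≤ (D : ℝ) ^ (5 * n ^ 2) * ε := by
        gcongr
        nlinarith

lemma iteratedDeriv_polynomial_eval (p : ℂ[X]) (i : ℕ) :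
    iteratedDeriv i (fun z => p.eval z) = fun z => (derivative^[i] p).eval z := by
  induction i with
  | zero => simp
  | succ i ih =>
    rw [iteratedDeriv_succ, ih, Function.iterate_succ_apply']
    funext z
    exact Polynomial.deriv _

/- Subtracting from `f` the polynomial that interpolates its small derivatives leaves a function
with zeros of order `k` at `0, …, L - 1`. -/
lemma norm_le_of_iteratedDeriv_small {f : ℂ → ℂ} (hf : Differentiable ℂ f) {L k X D : ℕ}
    (hX : 0 < X) (hLX : L ≤ X) (hpos : 0 < L * k) (hD : L * k ≤ D) (hXD : 5 * X ≤ D) {ε M : ℝ}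
    (hε : ∀ s < L, ∀ i < k, ‖iteratedDeriv i f (s : ℂ)‖ ≤ ε)
    (hM : ∀ z : ℂ, ‖z‖ ≤ 5 * X → ‖f z‖ ≤ M) {a : ℕ} (haX : a ≤ X) :
    ‖f a‖ ≤ (1 / 4) ^ (L * k) * M + 2 * ((D : ℝ) ^ (5 * (L * k) ^ 2) * ε) := by
  obtain ⟨p, hp, hpD⟩ := exists_polynomial_iterate_derivative_eval_eq hpos hD hε
  have hXD' : (5 * X : ℝ) ≤ D := by exact_mod_cast hXD
  have hXpos : (0 : ℝ) < X := by exact_mod_cast hX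
  have haX' : (a : ℝ) ≤ X := by exact_mod_cast haX
  have hdiff : Differentiable ℂ fun z => f z - p.eval z := hf.sub p.differentiable
  have hzero : ∀ s ∈ (range L).map (Nat.castEmbedding (R := ℂ)), ∀ i < k,
      iteratedDeriv i (fun z => f z - p.eval z) s = 0 := by
    intro s hs i hi
    obtain ⟨s, hsL, rfl⟩ := mem_map.1 hs
    rw [iteratedDeriv_fun_sub hf.contDiff.contDiffAt p.differentiable.contDiff.contDiffAt,
      iteratedDeriv_polynomial_eval]
    exact sub_eq_zero.2 (hp s (mem_range.1 hsL) i hi).symm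
  have hdist : ∀ s ∈ (range L).map (Nat.castEmbedding (R := ℂ)),
      ‖s‖ < 5 * X ∧ ‖(a : ℂ) - s‖ ≤ 1 / 4 * (5 * X - ‖s‖) := by
    intro s hs
    obtain ⟨s, hsL, rfl⟩ := mem_map.1 hs
    have hsX : (s : ℝ) ≤ X := by exact_mod_cast (mem_range.1 hsL).le.trans hLX
    have hsub : ‖(a : ℂ) - s‖ ≤ X := by
      rw [← Complex.ofReal_natCast a, ← Complex.ofReal_natCast s, ← Complex.ofReal_sub,
        Complex.norm_real]
      exact abs_sub_le_of_nonneg_of_le a.cast_nonneg haX' s.cast_nonneg hsX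
    rw [Nat.castEmbedding_apply, Complex.norm_natCast]
    constructor <;> linarith
  have hbound := norm_le_pow_mul_of_iteratedDeriv_eq_zero hdiff hzero (by positivity)
    (fun z hz => (norm_sub_le _ _).trans (add_le_add (hM z hz) (hpD z (hz.trans hXD'))))
    (a := a) (by rw [Complex.norm_natCast]; linarith) hdist
  rw [card_map, card_range] at hbound
  have hpa := hpD a (by rw [Complex.norm_natCast]; linarith)
  have hpow : ((1 : ℝ) / 4) ^ (L * k) ≤ 1 := pow_le_one₀ (by norm_num) (by norm_num)
  calc ‖f a‖ ≤ ‖f a - p.eval (a : ℂ)‖ + ‖p.eval (a : ℂ)‖ := by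
        simpa using norm_add_le (f a - p.eval (a : ℂ)) (p.eval (a : ℂ))
    _ ≤ _ := by linarith [mul_le_of_le_one_left ((norm_nonneg _).trans hpa) hpow]

/-! ### The field generated by the golden ratio and the Tribonacci constant -/

lemma exists_cube_eq_sq_add_self_add_one :
    ∃ x : ℝ, 9 / 5 < x ∧ x < 19 / 10 ∧ x ^ 3 = x ^ 2 + x + 1 := by
  have hcont : ContinuousOn (fun x : ℝ => x ^ 3 - x ^ 2 - x - 1) (Set.Icc (9 / 5) (19 / 10)) := by
    fun_prop
  obtain ⟨x, ⟨hlo, hhi⟩, hx⟩ := intermediate_value_Ioo (by norm_num) hcont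
    (show (0 : ℝ) ∈ Set.Ioo _ _ by constructor <;> norm_num)
  exact ⟨x, hlo, hhi, by linarith⟩

/-- The Tribonacci constant: the real root `≈ 1.839` of `x³ = x² + x + 1`. -/
noncomputable def tribConst : ℝ := exists_cube_eq_sq_add_self_add_one.choose

local notation "τ" => tribConst

lemma tribConst_gt : 9 / 5 < τ := exists_cube_eq_sq_add_self_add_one.choose_spec.1

lemma tribConst_lt : τ < 19 / 10 := exists_cube_eq_sq_add_self_add_one.choose_spec.2.1

lemma tribConst_pow_three : τ ^ 3 = τ ^ 2 + τ + 1 :=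
  exists_cube_eq_sq_add_self_add_one.choose_spec.2.2

lemma tribConst_pos : 0 < τ := by linarith [tribConst_gt]

lemma goldenRatio_gt : 8 / 5 < φ := by nlinarith [Real.goldenRatio_sq, Real.goldenRatio_pos]

lemma goldenRatio_lt : φ < 17 / 10 := by nlinarith [Real.goldenRatio_sq, Real.goldenRatio_pos]

lemma ofReal_tribConst_pow_three : (τ : ℂ) ^ 3 = τ ^ 2 + τ + 1 := by
  exact_mod_cast tribConst_pow_three

lemma ofReal_goldenRatio_sq : (φ : ℂ) ^ 2 = φ + 1 := by exact_mod_cast Real.goldenRatio_sq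

section Roots

variable {R : Type*} [CommRing R] {x : R}

lemma isIntegral_of_sq_eq (hx : x ^ 2 = x + 1) : IsIntegral ℤ x :=
  ⟨X ^ 2 - X - 1, by monicity!, by simp [hx]⟩

lemma isIntegral_of_cube_eq (hx : x ^ 3 = x ^ 2 + x + 1) : IsIntegral ℤ x :=
  ⟨X ^ 3 - X ^ 2 - X - 1, by monicity!, by simp [hx, add_assoc]⟩

end Roots

lemma norm_le_two_of_sq_eq {z : ℂ} (hz : z ^ 2 = z + 1) : ‖z‖ ≤ 2 := by
  have h : ‖z‖ ^ 2 ≤ ‖z‖ + 1 := by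
    rw [← norm_pow, hz]
    exact (norm_add_le _ _).trans (by simp)
  nlinarith

lemma norm_le_two_of_cube_eq {z : ℂ} (hz : z ^ 3 = z ^ 2 + z + 1) : ‖z‖ ≤ 2 := by
  have h : ‖z‖ ^ 3 ≤ ‖z‖ ^ 2 + ‖z‖ + 1 := by
    rw [← norm_pow, hz]
    exact (norm_add₃_le).trans (by simp)
  by_contra! h2
  nlinarith [mul_pos (sub_pos.2 h2) (sub_pos.2 h2), sq_nonneg (‖z‖ - 2)]

/-- The number field `ℚ(φ, τ)`, embedded in `ℂ`. -/
noncomputable def goldenTribField : IntermediateField ℚ ℂ := ℚ⟮(φ : ℂ)⟯ ⊔ ℚ⟮(τ : ℂ)⟯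

lemma isIntegral_goldenRatio : IsIntegral ℚ (φ : ℂ) :=
  (isIntegral_of_sq_eq ofReal_goldenRatio_sq).tower_top

lemma isIntegral_tribConst : IsIntegral ℚ (τ : ℂ) :=
  (isIntegral_of_cube_eq ofReal_tribConst_pow_three).tower_top

instance : FiniteDimensional ℚ goldenTribField := by
  have := IntermediateField.adjoin.finiteDimensional isIntegral_goldenRatio
  have := IntermediateField.adjoin.finiteDimensional isIntegral_tribConst
  unfold goldenTribField
  infer_instance

instance : NumberField goldenTribField where

section MinpolyDegree

variable {K L : Type*} [Field K] [Ring L] [Algebra K L] {x : L}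

lemma natDegree_minpoly_le_two (hx : x ^ 2 = x + 1) : (minpoly K x).natDegree ≤ 2 := by
  have hmonic : (X ^ 2 - X - 1 : K[X]).Monic := by monicity!
  refine (natDegree_le_of_dvd (minpoly.dvd K x ?_) hmonic.ne_zero).trans (by compute_degree)
  simp [hx]

lemma natDegree_minpoly_le_three (hx : x ^ 3 = x ^ 2 + x + 1) : (minpoly K x).natDegree ≤ 3 := by
  have hmonic : (X ^ 3 - X ^ 2 - X - 1 : K[X]).Monic := by monicity!
  refine (natDegree_le_of_dvd (minpoly.dvd K x ?_) hmonic.ne_zero).trans (by compute_degree)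
  simp [hx, add_assoc]

end MinpolyDegree

lemma finrank_goldenTribField_le : Module.finrank ℚ goldenTribField ≤ 6 := by
  refine (IntermediateField.finrank_sup_le _ _).trans ?_
  rw [IntermediateField.adjoin.finrank isIntegral_goldenRatio,
    IntermediateField.adjoin.finrank isIntegral_tribConst]
  exact Nat.mul_le_mul (natDegree_minpoly_le_two ofReal_goldenRatio_sq)
    (natDegree_minpoly_le_three ofReal_tribConst_pow_three)

/-- The golden ratio as an element of `ℚ(φ, τ)`. -/
noncomputable def goldenElt : goldenTribField :=
  ⟨φ, le_sup_left (a := ℚ⟮(φ : ℂ)⟯) (IntermediateField.mem_adjoin_simple_self ℚ _)⟩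

/-- The Tribonacci constant as an element of `ℚ(φ, τ)`. -/
noncomputable def tribElt : goldenTribField :=
  ⟨τ, le_sup_right (a := ℚ⟮(φ : ℂ)⟯) (IntermediateField.mem_adjoin_simple_self ℚ _)⟩

lemma goldenElt_sq : goldenElt ^ 2 = goldenElt + 1 :=
  Subtype.ext ofReal_goldenRatio_sq

lemma tribElt_pow_three : tribElt ^ 3 = tribElt ^ 2 + tribElt + 1 :=
  Subtype.ext ofReal_tribConst_pow_three

lemma exists_intCast_eq_norm {K : Type*} [Field K] [NumberField K] {x : K}
    (hx : IsIntegral ℤ x) : ∃ N : ℤ, Algebra.norm ℚ x = N := by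
  obtain ⟨N, hN⟩ := IsIntegrallyClosed.isIntegral_iff.1 (Algebra.isIntegral_norm ℚ hx)
  exact ⟨N, by simpa using hN.symm⟩

lemma one_le_norm_mul_pow_of_isIntegral {K : Type*} [Field K] [NumberField K] {x : K}
    (hx : IsIntegral ℤ x) (hx0 : x ≠ 0) (σ₀ : K →ₐ[ℚ] ℂ) {M : ℝ}
    (hM : ∀ σ : K →ₐ[ℚ] ℂ, ‖σ x‖ ≤ M) : 1 ≤ ‖σ₀ x‖ * M ^ (Module.finrank ℚ K - 1) := by
  classical
  obtain ⟨N, hN⟩ := exists_intCast_eq_norm hx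
  have hN0 : N ≠ 0 := by
    rintro rfl
    exact hx0 (Algebra.norm_eq_zero_iff.1 (hN.trans Int.cast_zero))
  have hprod : ∏ σ : K →ₐ[ℚ] ℂ, σ x = N := by
    rw [← Algebra.norm_eq_prod_embeddings ℚ ℂ x, hN, map_intCast]
  calc (1 : ℝ) ≤ ‖(N : ℂ)‖ := by
        rw [Complex.norm_intCast]
        exact_mod_cast Int.one_le_abs hN0
    _ = ‖σ₀ x‖ * ∏ σ ∈ univ.erase σ₀, ‖σ x‖ := by
        rw [← hprod, norm_prod, ← mul_prod_erase univ _ (mem_univ σ₀)]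
    _ ≤ ‖σ₀ x‖ * ∏ _σ ∈ univ.erase σ₀, M := by
        gcongr with σ
        exact hM σ
    _ = ‖σ₀ x‖ * M ^ (Module.finrank ℚ K - 1) := by
        rw [prod_const, card_erase_of_mem (mem_univ _), card_univ, AlgHom.card]

/-- `z` lies in `ℤ[φ, τ]` and has coordinates of absolute value at most `B` in the spanning set
`φ^i τ^j`, `i < 2`, `j < 3`. -/
def HasCoordinates (B : ℤ) (z : ℂ) : Prop :=
  ∃ k : Fin 2 → Fin 3 → ℤ, (∀ i j, |k i j| ≤ B) ∧
    z = ∑ i, ∑ j, k i j * ((φ : ℂ) ^ (i : ℕ) * (τ : ℂ) ^ (j : ℕ))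

namespace HasCoordinates

variable {B C : ℤ} {z w : ℂ}

lemma nonneg (h : HasCoordinates B z) : 0 ≤ B := by
  obtain ⟨k, hk, -⟩ := h
  exact (abs_nonneg _).trans (hk 0 0)

lemma mono (h : HasCoordinates B z) (hBC : B ≤ C) : HasCoordinates C z := by
  obtain ⟨k, hk, hz⟩ := h
  exact ⟨k, fun i j => (hk i j).trans hBC, hz⟩

lemma one : HasCoordinates 1 1 :=
  ⟨![![1, 0, 0], ![0, 0, 0]], by decide, by simp [Fin.sum_univ_three]⟩

lemma zero : HasCoordinates 0 0 := ⟨0, by simp, by simp⟩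

lemma add (hz : HasCoordinates B z) (hw : HasCoordinates C w) :
    HasCoordinates (B + C) (z + w) := by
  obtain ⟨k, hk, rfl⟩ := hz
  obtain ⟨l, hl, rfl⟩ := hw
  refine ⟨k + l, fun i j => (abs_add_le _ _).trans (add_le_add (hk i j) (hl i j)), ?_⟩
  simp [add_mul, sum_add_distrib]

lemma intCast_mul (a : ℤ) (hz : HasCoordinates B z) : HasCoordinates (|a| * B) (a * z) := by
  obtain ⟨k, hk, rfl⟩ := hz
  refine ⟨fun i j => a * k i j, fun i j => ?_, ?_⟩
  · rw [abs_mul]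
    exact mul_le_mul_of_nonneg_left (hk i j) (abs_nonneg a)
  · simp only [mul_sum, Int.cast_mul, mul_assoc]

lemma sum {ι : Type*} {s : Finset ι} {a : ι → ℤ} {x : ι → ℂ}
    (hx : ∀ i ∈ s, HasCoordinates B (x i)) :
    HasCoordinates ((∑ i ∈ s, |a i|) * B) (∑ i ∈ s, a i * x i) := by
  classical
  induction s using Finset.induction_on with
  | empty => simpa using zero
  | insert i s hi ih =>
    rw [sum_insert hi, sum_insert hi, add_mul]
    exact ((hx i (mem_insert_self i s)).intCast_mul (a i)).add
      (ih fun j hj => hx j (mem_insert_of_mem hj))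

lemma mul_goldenRatio (hz : HasCoordinates B z) : HasCoordinates (2 * B) (z * φ) := by
  have := hz.nonneg
  obtain ⟨k, hk, rfl⟩ := hz
  refine ⟨![k 1, k 0 + k 1], ?_, ?_⟩
  · intro i j
    have h₀ := abs_le.1 (hk 0 j)
    have h₁ := abs_le.1 (hk 1 j)
    rw [abs_le]
    fin_cases i <;> simp <;> omega
  · have hφ := ofReal_goldenRatio_sq
    generalize (φ : ℂ) = u at hφ ⊢
    simp only [Fin.sum_univ_two, Fin.sum_univ_three, Fin.val_zero, Fin.val_one, Fin.val_two,
      Matrix.cons_val, Pi.add_apply, Int.cast_add]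
    linear_combination (k 1 0 + k 1 1 * (τ : ℂ) + k 1 2 * τ ^ 2) * hφ

lemma mul_tribConst (hz : HasCoordinates B z) : HasCoordinates (2 * B) (z * τ) := by
  have := hz.nonneg
  obtain ⟨k, hk, rfl⟩ := hz
  refine ⟨fun i => ![k i 2, k i 0 + k i 2, k i 1 + k i 2], ?_, ?_⟩
  · intro i j
    have h₀ := abs_le.1 (hk i 0)
    have h₁ := abs_le.1 (hk i 1)
    have h₂ := abs_le.1 (hk i 2)
    rw [abs_le]
    fin_cases j <;> simp <;> omega
  · generalize (φ : ℂ) = u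
    simp only [Fin.sum_univ_two, Fin.sum_univ_three, Fin.val_zero, Fin.val_one, Fin.val_two,
      Matrix.cons_val, Int.cast_add]
    linear_combination (k 0 2 + k 1 2 * u) * ofReal_tribConst_pow_three

lemma mul_pow (e : ℕ) (hw : ∀ {B z}, HasCoordinates B z → HasCoordinates (2 ^ e * B) (z * w))
    (hz : HasCoordinates B z) (k : ℕ) : HasCoordinates (2 ^ (e * k) * B) (z * w ^ k) := by
  induction k with
  | zero => simpa using hz
  | succ k ih =>
    rw [mul_add_one, add_comm, pow_add, mul_assoc, pow_succ, ← mul_assoc z]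
    exact hw ih

lemma one_le_norm_mul_pow (hz : HasCoordinates B z) (hz0 : z ≠ 0) :
    1 ≤ ‖z‖ * (21 * B : ℝ) ^ 5 := by
  have hB : (0 : ℝ) ≤ B := by exact_mod_cast hz.nonneg
  obtain ⟨k, hk, hzk⟩ := hz
  set x : goldenTribField := ∑ i, ∑ j, k i j * (goldenElt ^ (i : ℕ) * tribElt ^ (j : ℕ)) with hx
  have hxz : (x : ℂ) = z := by
    rw [hzk, hx]
    simp [goldenElt, tribElt]
  have hint : IsIntegral ℤ x := IsIntegral.sum _ fun i _ => IsIntegral.sum _ fun j _ =>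
    (isIntegral_algebraMap (R := ℤ) (x := k i j)).mul
      (((isIntegral_of_sq_eq goldenElt_sq).pow _).mul
        ((isIntegral_of_cube_eq tribElt_pow_three).pow _))
  have hx0 : x ≠ 0 := fun h => hz0 (by simp [← hxz, h])
  have hconj (σ : goldenTribField →ₐ[ℚ] ℂ) : ‖σ x‖ ≤ 21 * B := by
    have hφ : ‖σ goldenElt‖ ≤ 2 :=
      norm_le_two_of_sq_eq (by rw [← map_pow, goldenElt_sq, map_add, map_one])
    have hτ : ‖σ tribElt‖ ≤ 2 := norm_le_two_of_cube_eq (by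
      rw [← map_pow, tribElt_pow_three, map_add, map_add, map_pow, map_one])
    calc ‖σ x‖ = ‖∑ i, ∑ j, (k i j : ℂ) * (σ goldenElt ^ (i : ℕ) * σ tribElt ^ (j : ℕ))‖ := by
          simp [hx]
      _ ≤ ∑ i : Fin 2, ∑ j : Fin 3, (B : ℝ) * (2 ^ (i : ℕ) * 2 ^ (j : ℕ)) := by
          refine norm_sum_le_of_le _ fun i _ => norm_sum_le_of_le _ fun j _ => ?_
          rw [norm_mul, norm_mul, norm_pow, norm_pow, Complex.norm_intCast]
          gcongr
          exact_mod_cast hk i j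
      _ = 21 * B := by
          simp [Fin.sum_univ_two, Fin.sum_univ_three]
          ring
  have hliouville := one_le_norm_mul_pow_of_isIntegral hint hx0 goldenTribField.val hconj
  have hbase : (1 : ℝ) ≤ 21 * B := by
    by_contra! hlt
    have : (B : ℝ) < 1 := by linarith
    have hB0 : B = 0 := le_antisymm (Int.lt_add_one_iff.1 (by exact_mod_cast this))
      (by exact_mod_cast hB)
    have hk0 : ∀ i j, k i j = 0 := fun i j => abs_nonpos_iff.1 (hB0 ▸ hk i j)
    exact hz0 (by simp [hzk, hk0])
  rw [← hxz]
  refine hliouville.trans ?_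
  exact mul_le_mul_of_nonneg_left (pow_le_pow_right₀ hbase
    (Nat.sub_le_sub_right finrank_goldenTribField_le 1)) (norm_nonneg _)

end HasCoordinates

/-! ### The auxiliary exponential polynomial -/

/-- The derivative of `X ^ 3 - X ^ 2 - X - 1` at `τ`, divided by `τ`; Binet's formula for `trib` has
main term `τ ^ m / tribDenom`. -/
noncomputable def tribDenom : ℝ := 4 * τ - τ ^ 2 - 1

/-- The quotient `(τ ^ m / T m) / (φ ^ n / F n)` of the leading constants in the two Binet formulas,
namely `tribDenom / √5`; writing `√5 = 2φ - 1` as `5 / (2φ - 1)` exhibits the denominator `5`. -/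
noncomputable def binetRatio : ℝ := (2 * φ - 1) * tribDenom / 5

/-- The linear form in logarithms that is exponentially small when `F n = T m`. -/
noncomputable def linForm (n m : ℕ) : ℝ :=
  Real.log binetRatio + n * Real.log φ - m * Real.log τ

lemma tribDenom_gt : 74 / 25 < tribDenom := by
  unfold tribDenom
  nlinarith [tribConst_gt, tribConst_lt]

lemma tribDenom_lt : tribDenom < 3 := by
  unfold tribDenom
  nlinarith [tribConst_gt, tribConst_lt]

lemma binetRatio_gt : 13 / 10 < binetRatio := by
  unfold binetRatio
  nlinarith [goldenRatio_gt, tribDenom_gt]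

lemma binetRatio_lt : binetRatio < 3 / 2 := by
  unfold binetRatio
  nlinarith [goldenRatio_gt, goldenRatio_lt, tribDenom_lt]

lemma abs_log_le_one {x : ℝ} (hx : 1 ≤ x) (hx2 : x ≤ 2) : |Real.log x| ≤ 1 := by
  rw [abs_of_nonneg (Real.log_nonneg hx)]
  linarith [Real.log_le_sub_one_of_pos (by linarith : 0 < x)]

lemma abs_log_goldenRatio_le : |Real.log φ| ≤ 1 :=
  abs_log_le_one (by linarith [goldenRatio_gt]) (by linarith [goldenRatio_lt])

lemma abs_log_tribConst_le : |Real.log τ| ≤ 1 :=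
  abs_log_le_one (by linarith [tribConst_gt]) (by linarith [tribConst_lt])

lemma abs_log_binetRatio_le : |Real.log binetRatio| ≤ 1 :=
  abs_log_le_one (by linarith [binetRatio_gt]) (by linarith [binetRatio_lt])

lemma inv_goldenRatio_eq : φ⁻¹ = φ - 1 :=
  inv_eq_of_mul_eq_one_right (by linear_combination Real.goldenRatio_sq)

lemma exp_natCast_le (k : ℕ) : Real.exp k ≤ 2 ^ (2 * k) := by
  rw [pow_mul, ← Real.exp_one_pow]
  gcongr
  linarith [Real.exp_one_lt_three]

lemma abs_exp_sub_exp_le {x y c δ : ℝ} (hx : x ≤ c) (hxy : |y - x| ≤ δ) (hδ : δ ≤ 1) :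
    |Real.exp x - Real.exp y| ≤ Real.exp c * (2 * δ) := by
  have hfactor : Real.exp x - Real.exp y = -(Real.exp x * (Real.exp (y - x) - 1)) := by
    rw [mul_sub, ← Real.exp_add]
    simp
  rw [hfactor, abs_neg, abs_mul, Real.abs_exp]
  gcongr
  exact (Real.abs_exp_sub_one_le (hxy.trans hδ)).trans (by gcongr)

/-- Indices `(a, b, c)` of the monomials `φ⁻ᵃ τᵇ binetRatioᶜ` with all exponents below `S`. -/
abbrev MonomialIndex (S : ℕ) := Fin S × Fin S × Fin S

section Monomials

variable {S : ℕ}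

/-- The logarithm of the monomial with index `i`. -/
noncomputable def monomialLog (i : MonomialIndex S) : ℝ :=
  i.2.1 * Real.log τ - i.1 * Real.log φ + i.2.2 * Real.log binetRatio

/-- The value of `monomialLog i` after `log binetRatio` has been replaced by
`m log τ - n log φ`. -/
noncomputable def eliminatedLog (n m : ℕ) (i : MonomialIndex S) : ℝ :=
  ((i.2.1 + m * i.2.2 : ℕ) : ℝ) * Real.log τ - ((i.1 + n * i.2.2 : ℕ) : ℝ) * Real.log φ

lemma eliminatedLog_sub_monomialLog (n m : ℕ) (i : MonomialIndex S) :
    eliminatedLog n m i - monomialLog i = -(i.2.2 * linForm n m) := by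
  unfold eliminatedLog monomialLog linForm
  push_cast
  ring

lemma abs_monomialLog_le (i : MonomialIndex S) : |monomialLog i| ≤ 3 * S := by
  have hterm (a : Fin S) {x : ℝ} (hx : |x| ≤ 1) : |a * x| ≤ S := by
    rw [abs_mul, Nat.abs_cast]
    exact (mul_le_of_le_one_right (Nat.cast_nonneg _) hx).trans (by exact_mod_cast a.2.le)
  have hφ := abs_le.1 (hterm i.1 abs_log_goldenRatio_le)
  have hτ := abs_le.1 (hterm i.2.1 abs_log_tribConst_le)
  have hα := abs_le.1 (hterm i.2.2 abs_log_binetRatio_le)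
  rw [monomialLog, abs_le]
  constructor <;> linarith

lemma abs_eliminatedLog_sub_le {n m : ℕ} {δ : ℝ} (hΛ : |linForm n m| ≤ δ) (i : MonomialIndex S) :
    |eliminatedLog n m i - monomialLog i| ≤ S * δ := by
  rw [eliminatedLog_sub_monomialLog, abs_neg, abs_mul, Nat.abs_cast]
  gcongr
  exact_mod_cast i.2.2.2.le

lemma abs_eliminatedLog_le {n m : ℕ} (hΛ : |linForm n m| ≤ 1) (i : MonomialIndex S) :
    |eliminatedLog n m i| ≤ 4 * S := by
  have hlog := abs_le.1 (abs_monomialLog_le i)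
  have hdiff := abs_le.1 (abs_eliminatedLog_sub_le hΛ i)
  rw [abs_le]
  constructor <;> linarith

lemma abs_exp_monomialLog_sub_le {n m Δ : ℕ} (i : MonomialIndex S)
    (hΛ : |linForm n m| ≤ (1 / 2) ^ Δ) {s X : ℕ} (hs : s ≤ X) (hSX : S * X ≤ Δ) :
    |Real.exp (monomialLog i * s) - Real.exp (eliminatedLog n m i * s)| ≤
      2 ^ (7 * (S * X) + 1) * (1 / 2) ^ Δ := by
  set δ : ℝ := 2 ^ (S * X) * (1 / 2) ^ Δ with hδ
  have hδ1 : δ ≤ 1 := by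
    rw [hδ, one_div_pow, mul_one_div]
    exact div_le_one_of_le₀ (pow_le_pow_right₀ one_le_two hSX) (by positivity)
  have hdiff : |eliminatedLog n m i * s - monomialLog i * s| ≤ δ := by
    rw [← sub_mul, abs_mul, Nat.abs_cast]
    calc _ ≤ S * (1 / 2) ^ Δ * (X : ℝ) := by
          gcongr
          exact abs_eliminatedLog_sub_le hΛ i
      _ = ((S * X : ℕ) : ℝ) * (1 / 2) ^ Δ := by push_cast; ring
      _ ≤ δ := by
          rw [hδ]
          gcongr
          exact_mod_cast Nat.lt_two_pow_self.le
  have hlog : monomialLog i * s ≤ (3 * (S * X) : ℕ) := by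
    calc monomialLog i * s ≤ 3 * S * X := by
          gcongr
          exact (le_abs_self _).trans (abs_monomialLog_le i)
      _ = (3 * (S * X) : ℕ) := by push_cast; ring
  refine (abs_exp_sub_exp_le hlog hdiff hδ1).trans ?_
  refine (mul_le_mul_of_nonneg_right (exp_natCast_le _) (by positivity)).trans_eq ?_
  rw [hδ]
  ring

/-- The monomial with index `i`, multiplied by `5 ^ S` to clear the denominator of `binetRatio`. -/
noncomputable def clearedMonomial (i : MonomialIndex S) : ℝ := 5 ^ S * Real.exp (monomialLog i)

lemma clearedMonomial_eq (i : MonomialIndex S) : clearedMonomial i =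
    (φ - 1) ^ (i.1 : ℕ) * τ ^ (i.2.1 : ℕ) *
      ((2 * φ - 1) * (4 * τ - τ ^ 2 - 1)) ^ (i.2.2 : ℕ) * 5 ^ (S - i.2.2) := by
  have hα : 0 < binetRatio := by linarith [binetRatio_gt]
  have hexp : Real.exp (monomialLog i) =
      (φ - 1) ^ (i.1 : ℕ) * τ ^ (i.2.1 : ℕ) * binetRatio ^ (i.2.2 : ℕ) := by
    rw [monomialLog, Real.exp_add, sub_eq_neg_add, Real.exp_add, ← mul_neg, ← Real.log_inv,
      Real.exp_nat_mul, Real.exp_nat_mul, Real.exp_nat_mul,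
      Real.exp_log (inv_pos.2 Real.goldenRatio_pos), Real.exp_log tribConst_pos, Real.exp_log hα,
      inv_goldenRatio_eq]
  have hfive : (5 : ℝ) ^ S = 5 ^ (i.2.2 : ℕ) * 5 ^ (S - i.2.2) := by
    rw [← pow_add, Nat.add_sub_cancel' i.2.2.2.le]
  rw [clearedMonomial, hexp, hfive, binetRatio, tribDenom, div_pow]
  field_simp

lemma HasCoordinates.mul_clearedMonomial {B : ℤ} {z : ℂ} (hz : HasCoordinates B z)
    (i : MonomialIndex S) : HasCoordinates (2 ^ (10 * S) * B) (z * clearedMonomial i) := by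
  have hfive {B z} (h : HasCoordinates B z) : HasCoordinates (2 ^ 3 * B) (z * 5) := by
    rw [mul_comm z]
    exact (h.intCast_mul 5).mono (by norm_num; linarith [h.nonneg])
  have hφ {B z} (h : HasCoordinates B z) : HasCoordinates (2 ^ 2 * B) (z * (φ - 1)) := by
    have := h.mul_goldenRatio.add (h.intCast_mul (-1))
    convert this.mono (?_ : _ ≤ 2 ^ 2 * B) using 1
    · push_cast; ring
    · norm_num; linarith [h.nonneg]
  have hτ {B z} (h : HasCoordinates B z) : HasCoordinates (2 ^ 1 * B) (z * τ) := h.mul_tribConst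
  have hα {B z} (h : HasCoordinates B z) :
      HasCoordinates (2 ^ 7 * B) (z * ((2 * φ - 1) * (4 * τ - τ ^ 2 - 1))) := by
    have h₁ := (h.mul_goldenRatio.intCast_mul 2).add (h.intCast_mul (-1))
    have h₂ := ((h₁.mul_tribConst.intCast_mul 4).add
      (h₁.mul_tribConst.mul_tribConst.intCast_mul (-1))).add (h₁.intCast_mul (-1))
    convert h₂.mono (?_ : _ ≤ 2 ^ 7 * B) using 1
    · push_cast; ring
    · norm_num; linarith [h.nonneg]
  have h := ((((hz.mul_pow 2 hφ i.1).mul_pow 1 hτ i.2.1).mul_pow 7 hα i.2.2).mul_pow 3 hfive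
    (S - i.2.2))
  rw [clearedMonomial_eq]
  convert h.mono (?_ : _ ≤ 2 ^ (10 * S) * B) using 1
  · push_cast; ring
  · simp only [← mul_assoc, ← pow_add]
    have := hz.nonneg
    gcongr
    · norm_num
    · omega

lemma hasCoordinates_clearedMonomial_pow (i : MonomialIndex S) (s : ℕ) :
    HasCoordinates (2 ^ (10 * S * s)) ((clearedMonomial i : ℂ) ^ s) := by
  simpa using HasCoordinates.one.mul_pow _ (fun h => h.mul_clearedMonomial i) s

end Monomials

section AuxiliaryFunction

variable {S : ℕ} (n m : ℕ) (p : MonomialIndex S → ℤ) (t u : ℕ)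

/-- The coefficient `p i (a + nc)ᵗ (b + mc)ᵘ`, `i = (a, b, c)`: up to powers of `-log φ` and
`log τ`, differentiating `auxFun` raises `t` or `u`. -/
def auxCoeff (i : MonomialIndex S) : ℤ :=
  p i * ((i.1 + n * i.2.2 : ℕ) ^ t * (i.2.1 + m * i.2.2 : ℕ) ^ u)

/-- The auxiliary exponential polynomial of Gelfond and Baker, in which the logarithm of
`binetRatio` has been eliminated by means of the linear form. -/
noncomputable def auxFun (z : ℂ) : ℂ :=
  ∑ i, auxCoeff n m p t u i * Complex.exp (eliminatedLog n m i * z)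

/-- The exponential sum approximated by `5 ^ (S * s) * auxFun n m p t u s`; it takes algebraic
integer values. -/
noncomputable def auxValue (s : ℕ) : ℂ :=
  ∑ i, auxCoeff n m p t u i * (clearedMonomial i : ℂ) ^ s

lemma differentiable_auxFun : Differentiable ℂ (auxFun n m p t u) := by
  unfold auxFun
  fun_prop

lemma iteratedDeriv_auxFun (k : ℕ) (z : ℂ) : iteratedDeriv k (auxFun n m p t u) z =
    ∑ j ∈ range (k + 1), ((-Real.log φ : ℂ) ^ j * (Real.log τ : ℂ) ^ (k - j) * k.choose j) *
      auxFun n m p (t + j) (u + (k - j)) z := by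
  unfold auxFun
  rw [iteratedDeriv_fun_sum (fun i _ => by fun_prop)]
  simp only [mul_sum]
  rw [sum_comm]
  refine sum_congr rfl fun i _ => ?_
  have hpow : (eliminatedLog n m i : ℂ) ^ k = ∑ j ∈ range (k + 1),
      (((i.1 + n * i.2.2 : ℕ) : ℂ) * -Real.log φ) ^ j *
        (((i.2.1 + m * i.2.2 : ℕ) : ℂ) * Real.log τ) ^ (k - j) * k.choose j := by
    rw [← add_pow, eliminatedLog]
    congr 1
    push_cast
    ring
  rw [iteratedDeriv_const_mul_field, iteratedDeriv_cexp_const_mul]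
  beta_reduce
  rw [hpow, sum_mul, mul_sum]
  refine sum_congr rfl fun j _ => ?_
  rw [mul_pow, mul_pow, auxCoeff, auxCoeff, pow_add, pow_add]
  push_cast
  ring

variable {n m p t u}

lemma norm_iteratedDeriv_auxFun_le {k : ℕ} {z : ℂ} {ε : ℝ}
    (hε : ∀ j ≤ k, ‖auxFun n m p (t + j) (u + (k - j)) z‖ ≤ ε) :
    ‖iteratedDeriv k (auxFun n m p t u) z‖ ≤ 2 ^ k * ε := by
  rw [iteratedDeriv_auxFun]
  calc _ ≤ ∑ j ∈ range (k + 1), (1 ^ j * 1 ^ (k - j) * (k.choose j : ℝ)) * ε := by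
        refine norm_sum_le_of_le _ fun j hj => ?_
        simp only [norm_mul, norm_pow, norm_neg, Complex.norm_natCast, Complex.norm_real,
          Real.norm_eq_abs]
        gcongr
        · exact abs_log_goldenRatio_le
        · exact abs_log_tribConst_le
        · exact hε j (mem_range_succ_iff.1 hj)
    _ = 2 ^ k * ε := by rw [← sum_mul, ← add_pow, one_add_one_eq_two]

lemma one_le_norm_auxValue_mul {Q : ℕ} (hQ : ∑ i, |auxCoeff n m p t u i| ≤ 2 ^ Q) {s X : ℕ}
    (hs : s ≤ X) (h0 : auxValue n m p t u s ≠ 0) :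
    1 ≤ ‖auxValue n m p t u s‖ * 2 ^ (5 * Q + 50 * (S * X) + 25) := by
  have hcoord : HasCoordinates (2 ^ Q * 2 ^ (10 * (S * X))) (auxValue n m p t u s) := by
    refine (HasCoordinates.sum fun i _ => hasCoordinates_clearedMonomial_pow i s).mono ?_
    rw [mul_assoc 10]
    gcongr
    norm_num
  refine (hcoord.one_le_norm_mul_pow h0).trans ?_
  gcongr
  calc _ ≤ (2 ^ 5 * ((2 ^ Q * 2 ^ (10 * (S * X)) : ℤ) : ℝ)) ^ 5 := by gcongr; norm_num
    _ = 2 ^ (5 * Q + 50 * (S * X) + 25) := by push_cast; ring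

lemma sum_abs_cast_le {Q : ℕ} (hQ : ∑ i, |auxCoeff n m p t u i| ≤ 2 ^ Q) :
    ∑ i, ‖(auxCoeff n m p t u i : ℂ)‖ ≤ 2 ^ Q := by
  simp only [Complex.norm_intCast]
  exact_mod_cast hQ

lemma norm_auxFun_le {Q : ℕ} (hQ : ∑ i, |auxCoeff n m p t u i| ≤ 2 ^ Q) {X : ℕ}
    (hΛ : |linForm n m| ≤ 1) {z : ℂ} (hz : ‖z‖ ≤ 5 * X) :
    ‖auxFun n m p t u z‖ ≤ 2 ^ (Q + 40 * (S * X)) := by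
  have hexp (i : MonomialIndex S) :
      ‖Complex.exp (eliminatedLog n m i * z)‖ ≤ 2 ^ (40 * (S * X)) := by
    refine (Complex.norm_exp_le_exp_norm _).trans ?_
    rw [norm_mul, Complex.norm_real, Real.norm_eq_abs]
    calc _ ≤ Real.exp (4 * S * (5 * X)) := by
          gcongr
          exact abs_eliminatedLog_le hΛ i
      _ = Real.exp (20 * (S * X) : ℕ) := by push_cast; ring_nf
      _ ≤ 2 ^ (40 * (S * X)) := (exp_natCast_le _).trans_eq (by ring)
  calc ‖auxFun n m p t u z‖
      ≤ ∑ i, ‖(auxCoeff n m p t u i : ℂ)‖ * 2 ^ (40 * (S * X)) :=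
        norm_sum_le_of_le _ fun i _ => by
          rw [norm_mul]
          gcongr
          exact hexp i
    _ ≤ 2 ^ Q * 2 ^ (40 * (S * X)) := by
        rw [← sum_mul]
        gcongr
        exact sum_abs_cast_le hQ
    _ = 2 ^ (Q + 40 * (S * X)) := (pow_add _ _ _).symm

lemma norm_auxValue_sub_le {Q Δ : ℕ} (hQ : ∑ i, |auxCoeff n m p t u i| ≤ 2 ^ Q)
    (hΛ : |linForm n m| ≤ (1 / 2) ^ Δ) {s X : ℕ} (hs : s ≤ X) (hSX : S * X ≤ Δ) :
    ‖auxValue n m p t u s - (5 ^ S) ^ s * auxFun n m p t u s‖ ≤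
      (5 ^ S) ^ s * (2 ^ (Q + 7 * (S * X) + 1) * (1 / 2) ^ Δ) := by
  have hsum : auxValue n m p t u s - (5 ^ S) ^ s * auxFun n m p t u s =
      (5 ^ S) ^ s * ∑ i, auxCoeff n m p t u i *
        ((Real.exp (monomialLog i * s) - Real.exp (eliminatedLog n m i * s) : ℝ) : ℂ) := by
    rw [auxValue, auxFun, mul_sum, mul_sum, ← sum_sub_distrib]
    refine sum_congr rfl fun i _ => ?_
    rw [clearedMonomial, mul_comm (monomialLog i), Real.exp_nat_mul]
    push_cast
    ring
  rw [hsum, norm_mul, norm_pow, norm_pow, Complex.norm_ofNat]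
  gcongr
  calc _ ≤ ∑ i, ‖(auxCoeff n m p t u i : ℂ)‖ * (2 ^ (7 * (S * X) + 1) * (1 / 2) ^ Δ) :=
        norm_sum_le_of_le _ fun i _ => by
          rw [norm_mul, Complex.norm_real]
          gcongr
          exact abs_exp_monomialLog_sub_le i hΛ hs hSX
    _ ≤ 2 ^ Q * (2 ^ (7 * (S * X) + 1) * (1 / 2) ^ Δ) := by
        rw [← sum_mul]
        gcongr
        exact sum_abs_cast_le hQ
    _ = 2 ^ (Q + 7 * (S * X) + 1) * (1 / 2) ^ Δ := by ring

lemma norm_auxFun_le_of_auxValue_eq_zero {Q Δ : ℕ}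
    (hQ : ∑ i, |auxCoeff n m p t u i| ≤ 2 ^ Q) (hΛ : |linForm n m| ≤ (1 / 2) ^ Δ) {s X : ℕ}
    (hs : s ≤ X) (hSX : S * X ≤ Δ) (h0 : auxValue n m p t u s = 0) :
    ‖auxFun n m p t u s‖ ≤ 2 ^ (Q + 7 * (S * X) + 1) * (1 / 2) ^ Δ := by
  have h := norm_auxValue_sub_le hQ hΛ hs hSX
  rw [h0, zero_sub, norm_neg, norm_mul, norm_pow, norm_pow, Complex.norm_ofNat] at h
  exact le_of_mul_le_mul_left h (by positivity)

lemma norm_auxValue_le {Q Δ : ℕ} (hQ : ∑ i, |auxCoeff n m p t u i| ≤ 2 ^ Q)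
    (hΛ : |linForm n m| ≤ (1 / 2) ^ Δ) {s X : ℕ} (hs : s ≤ X) (hSX : S * X ≤ Δ) :
    ‖auxValue n m p t u s‖ ≤ 2 ^ (3 * (S * X)) *
      (‖auxFun n m p t u s‖ + 2 ^ (Q + 7 * (S * X) + 1) * (1 / 2) ^ Δ) := by
  have hfive : ((5 : ℝ) ^ S) ^ s ≤ 2 ^ (3 * (S * X)) := by
    rw [← pow_mul, pow_mul (2 : ℝ)]
    calc (5 : ℝ) ^ (S * s) ≤ (2 ^ 3) ^ (S * s) := by gcongr; norm_num
      _ ≤ (2 ^ 3) ^ (S * X) := by gcongr; norm_num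
  have h := (norm_le_norm_add_norm_sub' _ _).trans
    (add_le_add_right (norm_auxValue_sub_le hQ hΛ hs hSX) _)
  rw [norm_mul, norm_pow, norm_pow, Complex.norm_ofNat, ← mul_add] at h
  exact h.trans (by gcongr)

end AuxiliaryFunction

/-! ### Multiplicative independence -/

section Norm

variable {K : Type*} [Field K] [NumberField K] {x y : K}

lemma norm_sq_eq_one_of_mul_eq_one (hx : IsIntegral ℤ x) (hy : IsIntegral ℤ y) (hxy : x * y = 1) :
    Algebra.norm ℚ x ^ 2 = 1 := by
  obtain ⟨M, hM⟩ := exists_intCast_eq_norm hx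
  obtain ⟨N, hN⟩ := exists_intCast_eq_norm hy
  have hMN : M * N = 1 := by
    have := congrArg (Algebra.norm ℚ) hxy
    rw [map_mul, map_one, hM, hN] at this
    exact_mod_cast this
  rw [hM]
  exact_mod_cast Int.isUnit_sq (.of_mul_eq_one N hMN)

lemma norm_natCast_eq_pow_finrank (n : ℕ) :
    Algebra.norm ℚ (n : K) = n ^ Module.finrank ℚ K := by
  simpa using Algebra.norm_algebraMap (S := K) (n : ℚ)

end Norm

lemma isIntegral_goldenElt : IsIntegral ℤ goldenElt := isIntegral_of_sq_eq goldenElt_sq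

lemma isIntegral_tribElt : IsIntegral ℤ tribElt := isIntegral_of_cube_eq tribElt_pow_three

lemma norm_goldenElt_sub_one_sq : Algebra.norm ℚ (goldenElt - 1) ^ 2 = 1 :=
  norm_sq_eq_one_of_mul_eq_one (isIntegral_goldenElt.sub isIntegral_one) isIntegral_goldenElt
    (by linear_combination goldenElt_sq)

lemma norm_tribElt_sq : Algebra.norm ℚ tribElt ^ 2 = 1 :=
  norm_sq_eq_one_of_mul_eq_one isIntegral_tribElt
    (((isIntegral_tribElt.pow 2).sub isIntegral_tribElt).sub isIntegral_one)
    (by linear_combination tribElt_pow_three)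

/-- The algebraic integer `5 * binetRatio` as an element of `ℚ(φ, τ)`. -/
noncomputable def binetElt : goldenTribField :=
  (2 * goldenElt - 1) * (4 * tribElt - tribElt ^ 2 - 1)

/-- The norm of `4τ - τ² - 1` divides a power of `22`, hence is prime to `5`, whereas
`2φ - 1 = √5`. -/
lemma norm_binetElt_sq_ne :
    Algebra.norm ℚ binetElt ^ 2 ≠ Algebra.norm ℚ (5 : goldenTribField) ^ 2 := by
  set d := Module.finrank ℚ goldenTribField
  have hd0 : d ≠ 0 := Module.finrank_pos.ne'
  have hnat (k : ℕ) : IsIntegral ℤ (k : goldenTribField) := isIntegral_natCast k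
  have hτ := isIntegral_tribElt
  obtain ⟨A, hA⟩ := exists_intCast_eq_norm
    ((((hnat 4).mul hτ).sub (hτ.pow 2)).sub isIntegral_one)
  obtain ⟨B, hB⟩ := exists_intCast_eq_norm
    ((((hnat 5).mul (hτ.pow 2)).sub ((hnat 3).mul hτ)).sub (hnat 4))
  push_cast at hA hB
  have hAB : A * B = 22 ^ d := by
    have hprod : (4 * tribElt - tribElt ^ 2 - 1) * (5 * tribElt ^ 2 - 3 * tribElt - 4) =
        ((22 : ℕ) : goldenTribField) := by
      push_cast
      linear_combination (18 - 5 * tribElt) * tribElt_pow_three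
    have := congrArg (Algebra.norm ℚ) hprod
    rw [map_mul, norm_natCast_eq_pow_finrank, hA, hB] at this
    exact_mod_cast this
  have hfive : Algebra.norm ℚ (5 : goldenTribField) = 5 ^ d := by
    exact_mod_cast norm_natCast_eq_pow_finrank (K := goldenTribField) 5
  have hsqrt : Algebra.norm ℚ (2 * goldenElt - 1) ^ 2 = 5 ^ d := by
    rw [← map_pow, ← hfive]
    congr 1
    linear_combination 4 * goldenElt_sq
  intro h
  rw [binetElt, map_mul, mul_pow, hsqrt, hA, hfive, sq ((5 : ℚ) ^ d)] at h
  have hA2 : A ^ 2 = 5 ^ d := by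
    exact_mod_cast mul_left_cancel₀ (by positivity) h
  have hprime : Prime (5 : ℤ) := by norm_num
  have hdvd : (5 : ℤ) ∣ 22 ^ d := hAB ▸
    (hprime.dvd_of_dvd_pow (hA2 ▸ dvd_pow_self 5 hd0)).mul_right B
  have := hprime.dvd_of_dvd_pow hdvd
  norm_num at this

lemma exists_norm_embedding_tribElt_lt_one : ∃ σ : goldenTribField →ₐ[ℚ] ℂ, ‖σ tribElt‖ < 1 := by
  classical
  by_contra! hge
  have hprod : (∏ σ : goldenTribField →ₐ[ℚ] ℂ, ‖σ tribElt‖) ^ 2 = 1 := by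
    rw [← norm_prod, ← Algebra.norm_eq_prod_embeddings ℚ ℂ tribElt, ← norm_pow, ← map_pow,
      norm_tribElt_sq, map_one, norm_one]
  have hval : 1 < ‖goldenTribField.val tribElt‖ := by
    change 1 < ‖(τ : ℂ)‖
    rw [Complex.norm_of_nonneg tribConst_pos.le]
    linarith [tribConst_gt]
  refine (one_lt_pow₀ ?_ two_ne_zero).ne' hprod
  rw [← mul_prod_erase univ (fun σ : goldenTribField →ₐ[ℚ] ℂ => ‖σ tribElt‖)
    (mem_univ goldenTribField.val)]
  exact one_lt_mul_of_lt_of_le hval (one_le_prod fun σ _ => hge σ)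

lemma norm_sq_mul_tribConst_of_norm_lt_one {v : ℂ} (hv : v ^ 3 = v ^ 2 + v + 1) (hv1 : ‖v‖ < 1) :
    ‖v‖ ^ 2 * τ = 1 := by
  have hτ := tribConst_gt
  have hne : v - τ ≠ 0 := by
    rintro h
    rw [sub_eq_zero.1 h, Complex.norm_of_nonneg tribConst_pos.le] at hv1
    linarith
  have hquad : v ^ 2 + (τ - 1) * v + (τ ^ 2 - τ - 1) = 0 :=
    mul_left_cancel₀ hne (by linear_combination hv - ofReal_tribConst_pow_three)
  have hre : v.re ^ 2 - v.im ^ 2 + (τ - 1) * v.re + (τ ^ 2 - τ - 1) = 0 := by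
    simpa [sq] using congrArg Complex.re hquad
  have him : v.im * (2 * v.re + (τ - 1)) = 0 := by
    have := congrArg Complex.im hquad
    simp only [sq, Complex.add_im, Complex.mul_im, Complex.sub_im, Complex.sub_re,
      Complex.ofReal_re, Complex.ofReal_im, Complex.one_re, Complex.one_im,
      Complex.zero_im] at this
    linear_combination this
  rw [Complex.sq_norm, Complex.normSq_apply]
  rcases mul_eq_zero.1 him with hreal | hre'
  · rw [hreal] at hre
    nlinarith [sq_nonneg (v.re + (τ - 1) / 2), tribConst_lt]
  · linear_combination tribConst_pow_three - τ * hre + τ * v.re * hre'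

lemma log_norm_sub_one_of_sq_eq {u : ℂ} (hu : u ^ 2 = u + 1) :
    Real.log ‖u - 1‖ = -Real.log φ ∨ Real.log ‖u - 1‖ = Real.log φ := by
  have hroots : (u - φ) * (u - (1 - φ)) = 0 := by
    linear_combination hu - ofReal_goldenRatio_sq
  rcases mul_eq_zero.1 hroots with h | h
  · left
    have : u - 1 = (φ⁻¹ : ℝ) := by
      rw [inv_goldenRatio_eq, Complex.ofReal_sub, Complex.ofReal_one]
      linear_combination h
    rw [this, Complex.norm_of_nonneg (inv_nonneg.2 Real.goldenRatio_pos.le), Real.log_inv]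
  · right
    have : u - 1 = -(φ : ℂ) := by linear_combination h
    rw [this, norm_neg, Complex.norm_of_nonneg Real.goldenRatio_pos.le]

lemma sub_mul_log_norm_add_eq_zero {a b a' b' : ℕ}
    (h : (goldenElt - 1) ^ a * tribElt ^ b = (goldenElt - 1) ^ a' * tribElt ^ b')
    (σ : goldenTribField →ₐ[ℚ] ℂ) :
    (a - a' : ℝ) * Real.log ‖σ goldenElt - 1‖ + (b - b' : ℝ) * Real.log ‖σ tribElt‖ = 0 := by
  have hφ : ‖σ goldenElt - 1‖ ≠ 0 := by
    have : goldenElt - 1 ≠ 0 := fun h0 => by simpa [h0] using norm_goldenElt_sub_one_sq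
    simpa using (map_ne_zero σ).2 this
  have hτ : ‖σ tribElt‖ ≠ 0 := by
    have : tribElt ≠ 0 := fun h0 => by simpa [h0] using norm_tribElt_sq
    simpa using this
  have hlog := congrArg (fun x => Real.log ‖σ x‖) h
  simp only [map_mul, map_pow, map_sub, map_one, norm_mul, norm_pow] at hlog
  rw [Real.log_mul (pow_ne_zero _ hφ) (pow_ne_zero _ hτ),
    Real.log_mul (pow_ne_zero _ hφ) (pow_ne_zero _ hτ)] at hlog
  simp only [Real.log_pow] at hlog
  linear_combination hlog

/-- Compares the given embedding with one under which `|τ|` becomes `τ ^ (-1 / 2)`, while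
`φ - 1 = φ⁻¹` stays the same or is replaced by `-φ`. -/
lemma unit_monomial_injective {a b a' b' : ℕ}
    (h : (goldenElt - 1) ^ a * tribElt ^ b = (goldenElt - 1) ^ a' * tribElt ^ b') :
    a = a' ∧ b = b' := by
  have hφ0 : Real.log φ ≠ 0 := (Real.log_pos Real.one_lt_goldenRatio).ne'
  have hτ0 : Real.log τ ≠ 0 := (Real.log_pos (by linarith [tribConst_gt])).ne'
  obtain ⟨σ, hσ⟩ := exists_norm_embedding_tribElt_lt_one
  have hlogτ : Real.log ‖σ tribElt‖ = -Real.log τ / 2 := by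
    have hmul := norm_sq_mul_tribConst_of_norm_lt_one
      (by rw [← map_pow, tribElt_pow_three]; simp) hσ
    have hpos : ‖σ tribElt‖ ^ 2 ≠ 0 := left_ne_zero_of_mul_eq_one hmul
    have hlog := congrArg Real.log hmul
    rw [Real.log_mul hpos tribConst_pos.ne', Real.log_pow, Real.log_one] at hlog
    push_cast at hlog
    linarith
  have hval : -(a - a' : ℝ) * Real.log φ + (b - b' : ℝ) * Real.log τ = 0 := by
    have := sub_mul_log_norm_add_eq_zero h goldenTribField.val
    change _ * Real.log ‖(φ : ℂ) - 1‖ + _ * Real.log ‖(τ : ℂ)‖ = 0 at this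
    rw [← Complex.ofReal_one, ← Complex.ofReal_sub, ← inv_goldenRatio_eq,
      Complex.norm_of_nonneg (inv_nonneg.2 Real.goldenRatio_pos.le), Real.log_inv,
      Complex.norm_of_nonneg tribConst_pos.le] at this
    linear_combination this
  have hconj := sub_mul_log_norm_add_eq_zero h σ
  rw [hlogτ] at hconj
  have hb : (b - b' : ℝ) * Real.log τ = 0 := by
    rcases log_norm_sub_one_of_sq_eq (u := σ goldenElt)
      (by rw [← map_pow, goldenElt_sq]; simp) with hφ | hφ <;> rw [hφ] at hconj <;> linarith
  have ha : (a - a' : ℝ) * Real.log φ = 0 := by linarith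
  have ha' := sub_eq_zero.1 ((mul_eq_zero.1 ha).resolve_right hφ0)
  have hb' := sub_eq_zero.1 ((mul_eq_zero.1 hb).resolve_right hτ0)
  exact ⟨by exact_mod_cast ha', by exact_mod_cast hb'⟩

section MonomialElt

variable {S : ℕ}

/-- `clearedMonomial i` as an element of `ℚ(φ, τ)`. -/
noncomputable def monomialElt (i : MonomialIndex S) : goldenTribField :=
  (goldenElt - 1) ^ (i.1 : ℕ) * tribElt ^ (i.2.1 : ℕ) * binetElt ^ (i.2.2 : ℕ) *
    5 ^ (S - i.2.2)

lemma coe_monomialElt (i : MonomialIndex S) : (monomialElt i : ℂ) = clearedMonomial i := by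
  have h2 : ((2 : goldenTribField) : ℂ) = 2 := rfl
  have h4 : ((4 : goldenTribField) : ℂ) = 4 := rfl
  have h5 : ((5 : goldenTribField) : ℂ) = 5 := rfl
  have hφ : (goldenElt : ℂ) = φ := rfl
  have hτ : (tribElt : ℂ) = τ := rfl
  rw [clearedMonomial_eq, monomialElt, binetElt]
  simp only [IntermediateField.coe_mul, IntermediateField.coe_pow, AddSubgroupClass.coe_sub,
    IntermediateField.coe_one, Complex.ofReal_mul, Complex.ofReal_pow, Complex.ofReal_sub,
    Complex.ofReal_one, Complex.ofReal_ofNat, h2, h4, h5, hφ, hτ]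

lemma norm_monomialElt_sq (i : MonomialIndex S) : Algebra.norm ℚ (monomialElt i) ^ 2 =
    (Algebra.norm ℚ binetElt ^ 2) ^ (i.2.2 : ℕ) *
      (Algebra.norm ℚ (5 : goldenTribField) ^ 2) ^ (S - i.2.2) := by
  have h (k l : ℕ) : (Algebra.norm ℚ (goldenElt - 1) ^ k * Algebra.norm ℚ tribElt ^ l) ^ 2 = 1 := by
    rw [mul_pow, pow_right_comm, pow_right_comm _ l, norm_goldenElt_sub_one_sq, norm_tribElt_sq,
      one_pow, one_pow, one_mul]
  simp only [monomialElt, map_mul, map_pow]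
  rw [mul_pow, mul_pow, h, one_mul, pow_right_comm, pow_right_comm _ (S - _)]

lemma pow_mul_pow_sub_injective {u v : ℚ} (hu : 0 < u) (hv : 0 < v) (huv : u ≠ v)
    {c c' : ℕ} (hc : c ≤ S) (hc' : c' ≤ S) (h : u ^ c * v ^ (S - c) = u ^ c' * v ^ (S - c')) :
    c = c' := by
  have hdiv {k : ℕ} (hk : k ≤ S) : (u / v) ^ k = u ^ k * v ^ (S - k) / v ^ S := by
    rw [div_pow, div_eq_div_iff (by positivity) (by positivity), mul_assoc, ← pow_add,
      Nat.sub_add_cancel hk]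
  refine pow_right_injective₀ (div_pos hu hv) (mt (div_eq_one_iff_eq hv.ne').1 huv) ?_
  simp only
  rw [hdiv hc, hdiv hc', h]

lemma monomialElt_ne_zero (i : MonomialIndex S) : monomialElt i ≠ 0 := fun h => by
  have hcoe := coe_monomialElt i
  rw [h, ZeroMemClass.coe_zero, eq_comm, Complex.ofReal_eq_zero, clearedMonomial] at hcoe
  exact (by positivity : (0 : ℝ) < 5 ^ S * Real.exp (monomialLog i)).ne' hcoe

lemma monomialElt_injective : Function.Injective (monomialElt (S := S)) := by
  rintro ⟨a, b, c⟩ ⟨a', b', c'⟩ h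
  have hnorm_ne {x : goldenTribField} (hx : x ≠ 0) : 0 < Algebra.norm ℚ x ^ 2 :=
    sq_pos_of_ne_zero (Algebra.norm_ne_zero_iff.2 hx)
  have hbinet : binetElt ≠ 0 := by
    simpa [monomialElt] using monomialElt_ne_zero ((0, 0, 1) : MonomialIndex 2)
  have hc : c = c' := by
    have hnorm := congrArg (fun x => Algebra.norm ℚ x ^ 2) h
    simp only [norm_monomialElt_sq] at hnorm
    exact Fin.ext (pow_mul_pow_sub_injective (hnorm_ne hbinet) (hnorm_ne (by norm_num))
      norm_binetElt_sq_ne c.2.le c'.2.le hnorm)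
  subst hc
  have hunit := monomialElt_ne_zero (a, b, c)
  simp only [monomialElt, mul_assoc _ (binetElt ^ _)] at h hunit
  obtain ⟨ha, hb⟩ := unit_monomial_injective
    (mul_right_cancel₀ (right_ne_zero_of_mul hunit) h)
  rw [Fin.ext ha, Fin.ext hb]

lemma monomialLog_injective : Function.Injective (monomialLog (S := S)) := fun i j h =>
  monomialElt_injective (Subtype.ext (by
    rw [coe_monomialElt, coe_monomialElt, clearedMonomial, clearedMonomial, h]))

end MonomialElt

/-! ### Siegel's lemma and extrapolation -/

section Siegel

variable {ι κ : Type*} [Fintype ι] [Fintype κ]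

attribute [local instance] Matrix.seminormedAddCommGroup in
lemma exists_ne_zero_int_mulVec_eq_zero [Nonempty κ] (A : Matrix κ ι ℤ) {B : ℤ} (hB : 1 ≤ B)
    (hA : ∀ r i, |A r i| ≤ B) (hcard : 2 * Fintype.card κ ≤ Fintype.card ι) :
    ∃ p : ι → ℤ, p ≠ 0 ∧ (∀ i, |p i| ≤ Fintype.card ι * B) ∧ A.mulVec p = 0 := by
  have hκ : 0 < Fintype.card κ := Fintype.card_pos
  obtain ⟨p, hp0, hAp, hp⟩ := Int.Matrix.exists_ne_zero_int_vec_norm_le A (by omega) hκ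
  refine ⟨p, hp0, fun i => ?_, hAp⟩
  have hB' : (1 : ℝ) ≤ B := by exact_mod_cast hB
  have hnorm : max 1 ‖A‖ ≤ B := by
    refine max_le hB' ((Matrix.norm_le_iff (by positivity)).2 fun r i => ?_)
    rw [Int.norm_eq_abs]
    exact_mod_cast hA r i
  have hι : (1 : ℝ) ≤ Fintype.card ι := by exact_mod_cast (by omega : 1 ≤ Fintype.card ι)
  have hbase : (1 : ℝ) ≤ Fintype.card ι * max 1 ‖A‖ :=
    one_le_mul_of_one_le_of_one_le hι (le_max_left _ _)
  have hexp : (Fintype.card κ : ℝ) / (Fintype.card ι - Fintype.card κ) ≤ 1 := by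
    have hκ' : (0 : ℝ) < Fintype.card κ := by exact_mod_cast hκ
    have hcard' : 2 * (Fintype.card κ : ℝ) ≤ Fintype.card ι := by exact_mod_cast hcard
    rw [div_le_one (by linarith)]
    linarith
  have hpi : ‖p i‖ ≤ Fintype.card ι * B := calc
    ‖p i‖ ≤ ‖p‖ := norm_le_pi_norm p i
    _ ≤ (Fintype.card ι * max 1 ‖A‖) ^ (1 : ℝ) :=
        hp.trans (Real.rpow_le_rpow_of_exponent_le hbase hexp)
    _ ≤ Fintype.card ι * B := by
        rw [Real.rpow_one]
        gcongr
  rw [Int.norm_eq_abs] at hpi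
  exact_mod_cast hpi

lemma exists_int_sum_mul_eq_zero [Nonempty κ] {z : κ → ι → ℂ} {B : ℤ} (hB : 1 ≤ B)
    (hz : ∀ r i, HasCoordinates B (z r i)) (hcard : 12 * Fintype.card κ ≤ Fintype.card ι) :
    ∃ p : ι → ℤ, p ≠ 0 ∧ (∀ i, |p i| ≤ Fintype.card ι * B) ∧ ∀ r, ∑ i, p i * z r i = 0 := by
  choose k hk hzk using hz
  obtain ⟨p, hp0, hp, hkp⟩ := exists_ne_zero_int_mulVec_eq_zero
    (Matrix.of fun (r : κ × Fin 2 × Fin 3) i => k r.1 i r.2.1 r.2.2) hB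
    (fun r i => hk r.1 i r.2.1 r.2.2) (by simp; omega)
  refine ⟨p, hp0, hp, fun r => ?_⟩
  have hcoord (j : Fin 2) (j' : Fin 3) : ∑ i, (p i : ℂ) * k r i j j' = 0 := by
    have := congrFun hkp (r, j, j')
    simp only [Matrix.mulVec, dotProduct, Matrix.of_apply, Pi.zero_apply] at this
    exact_mod_cast (sum_congr rfl fun i _ => mul_comm _ _).trans this
  simp only [hzk, mul_sum, ← mul_assoc]
  rw [sum_comm]
  refine sum_eq_zero fun j _ => ?_
  rw [sum_comm]
  refine sum_eq_zero fun j' _ => ?_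
  simp only [← sum_mul, hcoord, zero_mul]

end Siegel

lemma two_pow_mul_half_pow_le {a b c : ℕ} (h : a + c ≤ b) :
    (2 : ℝ) ^ a * (1 / 2) ^ b ≤ (1 / 2) ^ c := by
  calc (2 : ℝ) ^ a * (1 / 2) ^ b ≤ 2 ^ a * (1 / 2) ^ (a + c) := by
        gcongr ?_ * ?_
        exact pow_le_pow_of_le_one (by norm_num) (by norm_num) h
    _ = (1 / 2) ^ c := by
        rw [pow_add, ← mul_assoc, ← mul_pow]
        norm_num

section Extrapolation

variable {S n m K L X d Q Δ : ℕ} {p : MonomialIndex S → ℤ}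

lemma norm_auxFun_le_of_forall_auxValue_eq_zero (hL : 0 < L) (hK : 0 < K) (hLX : L ≤ X)
    (hLK : L * K ≤ 2 ^ d) (hXd : 5 * X ≤ 2 ^ d)
    (hQ : ∀ t u, t + u ≤ 4 * K → ∑ i, |auxCoeff n m p t u i| ≤ 2 ^ Q)
    (hΛ : |linForm n m| ≤ (1 / 2) ^ Δ) (hSX : S * X ≤ Δ)
    (hzero : ∀ t < 2 * K, ∀ u < 2 * K, ∀ s < L, auxValue n m p t u s = 0)
    {t u s : ℕ} (ht : t < K) (hu : u < K) (hs : s ≤ X) :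
    ‖auxFun n m p t u s‖ ≤ (1 / 4) ^ (L * K) * 2 ^ (Q + 40 * (S * X)) +
      2 * ((2 ^ d) ^ (5 * (L * K) ^ 2) *
        (2 ^ K * (2 ^ (Q + 7 * (S * X) + 1) * (1 / 2) ^ Δ))) := by
  have hΛ1 : |linForm n m| ≤ 1 := hΛ.trans (pow_le_one₀ (by norm_num) (by norm_num))
  have hderiv : ∀ r < L, ∀ k < K, ‖iteratedDeriv k (auxFun n m p t u) (r : ℂ)‖ ≤
      2 ^ K * (2 ^ (Q + 7 * (S * X) + 1) * (1 / 2) ^ Δ) := by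
    intro r hr k hk
    refine (norm_iteratedDeriv_auxFun_le fun j hj => ?_).trans
      (mul_le_mul_of_nonneg_right (pow_le_pow_right₀ one_le_two hk.le) (by positivity))
    exact norm_auxFun_le_of_auxValue_eq_zero (hQ _ _ (by omega)) hΛ (by omega) hSX
      (hzero _ (by omega) _ (by omega) r hr)
  have h := norm_le_of_iteratedDeriv_small (differentiable_auxFun n m p t u) (hL.trans_le hLX) hLX
    (Nat.mul_pos hL hK) hLK hXd hderiv
    (fun z hz => norm_auxFun_le (hQ t u (by omega)) hΛ1 hz) hs
  rwa [Nat.cast_pow, Nat.cast_ofNat] at h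

/-- The zeros make the derivatives of `auxFun` of order below `2K` small at the points below `L`; by
the Schwarz lemma those of order below `K` are then small at the points below `X`, and so are the
algebraic integers they approximate, too small to be different from `0`. -/
lemma auxValue_eq_zero_of_forall_auxValue_eq_zero (hL : 0 < L) (hK : 0 < K) (hLX : L ≤ X)
    (hLK : L * K ≤ 2 ^ d) (hXd : 5 * X ≤ 2 ^ d)
    (hQ : ∀ t u, t + u ≤ 4 * K → ∑ i, |auxCoeff n m p t u i| ≤ 2 ^ Q)
    (hΛ : |linForm n m| ≤ (1 / 2) ^ Δ)
    (hmain : 6 * Q + 93 * (S * X) + 27 ≤ 2 * (L * K))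
    (herror : 60 * (S * X) + 6 * Q + K + 5 * d * (L * K) ^ 2 + 29 ≤ Δ)
    (hzero : ∀ t < 2 * K, ∀ u < 2 * K, ∀ s < L, auxValue n m p t u s = 0) :
    ∀ t < K, ∀ u < K, ∀ s < X, auxValue n m p t u s = 0 := by
  intro t ht u hu s hs
  by_contra h0
  have hSX : S * X ≤ Δ := by omega
  set E : ℝ := 2 ^ (Q + 7 * (S * X) + 1) * (1 / 2) ^ Δ with hE
  set G : ℝ := 2 ^ (5 * Q + 50 * (S * X) + 25) with hG
  have hF := norm_auxFun_le_of_forall_auxValue_eq_zero hL hK hLX hLK hXd hQ hΛ hSX hzero ht hu hs.le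
  have hvalue := norm_auxValue_le (hQ t u (by omega)) hΛ hs.le hSX
  have hliouville := one_le_norm_auxValue_mul (hQ t u (by omega)) hs.le h0
  have hfirst : 2 ^ (3 * (S * X)) * ((1 / 4) ^ (L * K) * 2 ^ (Q + 40 * (S * X))) * G ≤ 1 / 4 :=
    calc _ = 2 ^ (6 * Q + 93 * (S * X) + 25) * (1 / 2 : ℝ) ^ (2 * (L * K)) := by
          rw [hG, pow_mul (1 / 2 : ℝ)]
          ring
      _ ≤ (1 / 2) ^ 2 := two_pow_mul_half_pow_le (by omega)
      _ = 1 / 4 := by norm_num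
  have hsecond : 2 ^ (3 * (S * X)) * (2 * ((2 ^ d) ^ (5 * (L * K) ^ 2) * (2 ^ K * E))) * G ≤
      1 / 4 :=
    calc _ = 2 ^ (60 * (S * X) + 6 * Q + K + 5 * d * (L * K) ^ 2 + 27) * (1 / 2 : ℝ) ^ Δ := by
          rw [hE, hG, ← pow_mul]
          ring
      _ ≤ (1 / 2) ^ 2 := two_pow_mul_half_pow_le (by omega)
      _ = 1 / 4 := by norm_num
  have hthird : 2 ^ (3 * (S * X)) * E * G ≤ 1 / 4 :=
    calc _ = 2 ^ (60 * (S * X) + 6 * Q + 26) * (1 / 2 : ℝ) ^ Δ := by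
          rw [hE, hG]
          ring
      _ ≤ (1 / 2) ^ 2 := two_pow_mul_half_pow_le (by omega)
      _ = 1 / 4 := by norm_num
  have hbound : 1 ≤ 2 ^ (3 * (S * X)) * ((1 / 4) ^ (L * K) * 2 ^ (Q + 40 * (S * X)) +
      2 * ((2 ^ d) ^ (5 * (L * K) ^ 2) * (2 ^ K * E)) + E) * G :=
    hliouville.trans (by gcongr; exact hvalue.trans (by gcongr))
  linarith

end Extrapolation

/-! ### A bound for the indices of a small linear form -/

section Parameters

set_option exponentiation.threshold 2000

/-- The exponents of the auxiliary function are taken below `exponentBound l` when the indices of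
the linear form are at most `4 * 2 ^ l`. With `S` exponents, `L` zeros and `K` the order of
vanishing, the constants here and below balance Siegel's condition `12 K² L ≤ S³` against the
requirement that `L K` dominate `S X` in each extrapolation to `X` zeros. -/
def exponentBound (l : ℕ) : ℕ := 2 ^ 100 * l ^ 3

/-- The factor by which one extrapolation step enlarges the set of zeros. -/
def gridGrowth (l : ℕ) : ℕ := 2 ^ 14 * l

/-- After `j` extrapolation steps the auxiliary function vanishes at the integers below
`gridSize l j`. -/
def gridSize (l j : ℕ) : ℕ := gridGrowth l ^ j * (2 ^ 22 * l)

/-- The order of vanishing, in each variable, that survives all `15` extrapolation steps. -/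
def finalOrder (l : ℕ) : ℕ := 2 ^ 8 * exponentBound l * gridGrowth l

/-- The order of vanishing in each variable after `j` extrapolation steps. -/
def vanishingOrder (l j : ℕ) : ℕ := 2 ^ (15 - j) * finalOrder l

/-- The binary logarithm of a bound for the coefficients of the auxiliary function. -/
def coeffBits (l : ℕ) : ℕ :=
  6 * l + 8 * (l * vanishingOrder l 0) + 10 * (exponentBound l * gridSize l 0)

variable {l j : ℕ}

lemma vanishingOrder_eq_two_mul (hj : j < 15) :
    vanishingOrder l j = 2 * vanishingOrder l (j + 1) := by
  rw [vanishingOrder, vanishingOrder, ← mul_assoc, ← pow_succ',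
    show 15 - (j + 1) + 1 = 15 - j by omega]

lemma gridSize_succ : gridSize l (j + 1) = gridGrowth l * gridSize l j := by
  rw [gridSize, gridSize, pow_succ', mul_assoc]

lemma exponentBound_pos (hl : 0 < l) : 0 < exponentBound l := by
  unfold exponentBound
  positivity

lemma gridGrowth_pos (hl : 0 < l) : 0 < gridGrowth l := by
  unfold gridGrowth
  positivity

lemma gridSize_pos (hl : 0 < l) : 0 < gridSize l j := by
  have := gridGrowth_pos hl
  unfold gridSize
  positivity

lemma vanishingOrder_pos (hl : 0 < l) : 0 < vanishingOrder l j := by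
  have := gridGrowth_pos hl
  have := exponentBound_pos hl
  unfold vanishingOrder finalOrder
  positivity

lemma finalOrder_le_vanishingOrder : finalOrder l ≤ vanishingOrder l j :=
  Nat.le_mul_of_pos_left _ (by positivity)

lemma gridSize_zero_le (hl : 0 < l) : gridSize l 0 ≤ gridSize l j := by
  rw [gridSize, pow_zero, one_mul]
  exact Nat.le_mul_of_pos_left _ (pow_pos (gridGrowth_pos hl) j)

lemma vanishingOrder_antitone {k : ℕ} (hjk : j ≤ k) : vanishingOrder l k ≤ vanishingOrder l j :=
  Nat.mul_le_mul_right _ (Nat.pow_le_pow_right two_pos (by omega))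

lemma succ_pow_le_two_mul_pow (hl : 1100 ≤ l) : (l + 1) ^ 39 ≤ 2 * l ^ 39 := by
  have hl' : (1100 : ℝ) ≤ l := by exact_mod_cast hl
  have hinv : 1 / ((l : ℝ) + 1) ≤ 1 / 1100 := one_div_le_one_div_of_le (by norm_num) (by linarith)
  have hbernoulli := one_add_mul_le_pow (a := -(1 / ((l : ℝ) + 1))) (by linarith) 39
  have hratio : 1 + -(1 / ((l : ℝ) + 1)) = l / (l + 1) := by
    field_simp
    ring
  have hhalf : (1 : ℝ) / 2 ≤ l ^ 39 / (l + 1) ^ 39 := by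
    rw [← div_pow, ← hratio]
    refine le_trans ?_ hbernoulli
    push_cast
    linarith
  rw [div_le_div_iff₀ (by norm_num) (by positivity)] at hhalf
  have : ((l : ℝ) + 1) ^ 39 ≤ 2 * l ^ 39 := by linarith
  exact_mod_cast this

lemma two_pow_mul_pow_le_two_pow (hl : 1100 ≤ l) : 2 ^ 684 * l ^ 39 ≤ 2 ^ l := by
  induction l, hl using Nat.le_induction with
  | base => norm_num
  | succ l hl ih =>
    calc 2 ^ 684 * (l + 1) ^ 39 ≤ 2 ^ 684 * (2 * l ^ 39) :=
          Nat.mul_le_mul_left _ (succ_pow_le_two_mul_pow hl)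
      _ = 2 * (2 ^ 684 * l ^ 39) := by ring
      _ ≤ 2 * 2 ^ l := Nat.mul_le_mul_left _ ih
      _ = 2 ^ (l + 1) := (pow_succ' 2 l).symm

lemma two_pow_mul_exponentBound_le (hl : 1100 ≤ l) : 2 ^ 4 * exponentBound l ≤ 2 ^ l := by
  refine le_trans ?_ (two_pow_mul_pow_le_two_pow hl)
  rw [exponentBound, ← mul_assoc, ← pow_add]
  exact Nat.mul_le_mul (Nat.pow_le_pow_right two_pos (by norm_num))
    (Nat.pow_le_pow_right (by omega) (by norm_num))

lemma card_monomialIndex (S : ℕ) : Fintype.card (MonomialIndex S) = S ^ 3 := by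
  simp only [Fintype.card_prod, Fintype.card_fin]
  ring

lemma exponentBound_pow_three_le (hl : 1100 ≤ l) : exponentBound l ^ 3 ≤ 2 ^ (3 * l) := by
  rw [mul_comm, pow_mul]
  exact Nat.pow_le_pow_left (by have := two_pow_mul_exponentBound_le hl; omega) 3

lemma twelve_mul_vanishingOrder_sq_mul_gridSize_le :
    12 * (vanishingOrder l 0 * (vanishingOrder l 0 * gridSize l 0)) ≤ exponentBound l ^ 3 := by
  simp only [vanishingOrder, finalOrder, gridSize, gridGrowth, exponentBound]
  calc _ = (12 * 2 ^ 296) * l ^ 9 := by ring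
    _ ≤ 2 ^ 300 * l ^ 9 := Nat.mul_le_mul_right _ (by norm_num)
    _ = _ := by ring

lemma exponentBound_pow_three_le_gridSize (hl : 1100 ≤ l) :
    exponentBound l ^ 3 ≤ gridSize l 15 := by
  simp only [gridSize, gridGrowth, exponentBound]
  calc _ = 2 ^ 68 * (2 ^ 232 * l ^ 9) := by ring
    _ ≤ l ^ 7 * (2 ^ 232 * l ^ 9) :=
        Nat.mul_le_mul_right _ ((by norm_num : 2 ^ 68 ≤ 1100 ^ 7).trans (Nat.pow_le_pow_left hl 7))
    _ = _ := by ring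

lemma gridSize_mul_vanishingOrder_le (hl : 0 < l) (hj : j < 15) :
    gridSize l j * vanishingOrder l (j + 1) ≤ 2 ^ 340 * l ^ 19 := by
  have hexp : 13 * j + 158 = 14 * j + (15 - (j + 1)) + 144 := by omega
  calc _ = 2 ^ (13 * j + 158) * l ^ (j + 5) := by
        rw [hexp, gridSize, vanishingOrder, finalOrder, gridGrowth, exponentBound, pow_add 2,
          pow_add 2, pow_mul 2]
        generalize 15 - (j + 1) = k
        ring
    _ ≤ 2 ^ 340 * l ^ 19 := by gcongr <;> omega

lemma mul_sq_gridSize_mul_vanishingOrder_le (hl : 1100 ≤ l) (hj : j < 15) :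
    8 * (l * (gridSize l j * vanishingOrder l (j + 1)) ^ 2) ≤ 2 ^ (l - 1) := by
  have hl0 : 0 < l := by omega
  refine Nat.le_of_mul_le_mul_left ?_ two_pos
  calc _ ≤ 2 * (8 * (l * (2 ^ 340 * l ^ 19) ^ 2)) := by
        have := gridSize_mul_vanishingOrder_le hl0 hj
        gcongr
    _ = 2 ^ 684 * l ^ 39 := by ring
    _ ≤ 2 ^ l := two_pow_mul_pow_le_two_pow hl
    _ = 2 * 2 ^ (l - 1) := by rw [← pow_succ', Nat.sub_add_cancel hl0]

lemma coeffBits_add_le (hl : 1100 ≤ l) :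
    6 * coeffBits l + 93 * (exponentBound l * gridSize l (j + 1)) + vanishingOrder l (j + 1) + 27 ≤
      2 * (gridSize l j * vanishingOrder l (j + 1)) := by
  have hl0 : 0 < l := by omega
  have hgrid : 256 * (exponentBound l * gridSize l (j + 1)) = finalOrder l * gridSize l j := by
    rw [gridSize_succ, finalOrder]
    ring
  have horder : 128 * (l * vanishingOrder l 0) ≤ finalOrder l * gridSize l j := by
    calc _ = finalOrder l * gridSize l 0 := by
          rw [vanishingOrder, gridSize]
          ring
      _ ≤ finalOrder l * gridSize l j := Nat.mul_le_mul_left _ (gridSize_zero_le hl0)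
  have hν : finalOrder l * gridSize l j ≤ gridSize l j * vanishingOrder l (j + 1) := by
    rw [mul_comm]
    exact Nat.mul_le_mul_left _ finalOrder_le_vanishingOrder
  have hgrid0 : exponentBound l * gridSize l 0 ≤ exponentBound l * gridSize l (j + 1) :=
    Nat.mul_le_mul_left _ (gridSize_zero_le hl0)
  have hl_le : l ≤ l * vanishingOrder l 0 := Nat.le_mul_of_pos_right _ (vanishingOrder_pos hl0)
  have horder_le : vanishingOrder l (j + 1) ≤ l * vanishingOrder l 0 :=
    (vanishingOrder_antitone (Nat.zero_le _)).trans (Nat.le_mul_of_pos_left _ hl0)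
  unfold coeffBits
  omega

lemma extrapolation_error_le (hl : 1100 ≤ l) (hj : j < 15) :
    60 * (exponentBound l * gridSize l (j + 1)) + 6 * coeffBits l + vanishingOrder l (j + 1) +
      5 * l * (gridSize l j * vanishingOrder l (j + 1)) ^ 2 + 29 ≤ 2 ^ (l - 1) := by
  have hmain := coeffBits_add_le (j := j) hl
  have hsq := mul_sq_gridSize_mul_vanishingOrder_le hl hj
  set ν := gridSize l j * vanishingOrder l (j + 1)
  have hν : ν ≤ ν ^ 2 := Nat.le_self_pow two_ne_zero ν
  have hlν : 1100 * ν ^ 2 ≤ l * ν ^ 2 := Nat.mul_le_mul_right _ hl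
  rw [mul_assoc 5]
  omega

lemma gridSize_mul_vanishingOrder_le_two_pow (hl : 1100 ≤ l) (hj : j < 15) :
    gridSize l j * vanishingOrder l (j + 1) ≤ 2 ^ l := by
  have hsq := mul_sq_gridSize_mul_vanishingOrder_le hl hj
  set ν := gridSize l j * vanishingOrder l (j + 1)
  calc ν ≤ ν ^ 2 := Nat.le_self_pow two_ne_zero ν
    _ ≤ l * ν ^ 2 := Nat.le_mul_of_pos_left _ (by omega)
    _ ≤ 2 ^ (l - 1) := by omega
    _ ≤ 2 ^ l := Nat.pow_le_pow_right two_pos (Nat.sub_le l 1)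

lemma five_mul_gridSize_le (hl : 1100 ≤ l) (hj : j < 15) : 5 * gridSize l (j + 1) ≤ 2 ^ l := by
  have herror := extrapolation_error_le hl hj
  have hgrid : gridSize l (j + 1) ≤ exponentBound l * gridSize l (j + 1) :=
    Nat.le_mul_of_pos_left _ (exponentBound_pos (by omega))
  have hpow : 2 ^ (l - 1) ≤ 2 ^ l := Nat.pow_le_pow_right two_pos (Nat.sub_le l 1)
  omega

end Parameters

section SmallLinearForm

variable {n m l : ℕ}

lemma add_mul_le_two_pow (hl : 1100 ≤ l) {a c k : ℕ} (ha : a < exponentBound l)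
    (hc : c < exponentBound l) (hk : k ≤ 4 * 2 ^ l) : a + k * c ≤ 2 ^ (2 * l) := by
  have hS := two_pow_mul_exponentBound_le hl
  have hkc : k * c ≤ 4 * 2 ^ l * exponentBound l := Nat.mul_le_mul hk hc.le
  rw [two_mul, pow_add]
  nlinarith

lemma abs_auxCoeff_le (hl : 1100 ≤ l) (hn : n ≤ 4 * 2 ^ l) (hm : m ≤ 4 * 2 ^ l)
    {p : MonomialIndex (exponentBound l) → ℤ} {B : ℤ} (hp : ∀ i, |p i| ≤ B) (t u : ℕ)
    (i : MonomialIndex (exponentBound l)) :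
    |auxCoeff n m p t u i| ≤ B * 2 ^ (2 * l * (t + u)) := by
  have hB : 0 ≤ B := (abs_nonneg _).trans (hp i)
  have hfst : ((i.1 + n * i.2.2 : ℕ) : ℤ) ≤ 2 ^ (2 * l) := by
    exact_mod_cast add_mul_le_two_pow hl i.1.2 i.2.2.2 hn
  have hsnd : ((i.2.1 + m * i.2.2 : ℕ) : ℤ) ≤ 2 ^ (2 * l) := by
    exact_mod_cast add_mul_le_two_pow hl i.2.1.2 i.2.2.2 hm
  rw [auxCoeff, abs_mul, abs_mul, abs_pow, abs_pow, Nat.abs_cast, Nat.abs_cast, pow_mul, pow_add]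
  gcongr
  exact hp i

lemma exists_auxValue_eq_zero (hl : 1100 ≤ l) (hn : n ≤ 4 * 2 ^ l) (hm : m ≤ 4 * 2 ^ l) :
    ∃ p : MonomialIndex (exponentBound l) → ℤ, p ≠ 0 ∧
      (∀ t u, t + u ≤ 2 * vanishingOrder l 0 → ∑ i, |auxCoeff n m p t u i| ≤ 2 ^ coeffBits l) ∧
      ∀ t < vanishingOrder l 0, ∀ u < vanishingOrder l 0, ∀ s < gridSize l 0,
        auxValue n m p t u s = 0 := by
  have hl0 : 0 < l := by omega
  set K := vanishingOrder l 0
  set L := gridSize l 0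
  set S := exponentBound l
  have : Nonempty (Fin K × Fin K × Fin L) :=
    have hK : 0 < K := vanishingOrder_pos hl0
    ⟨⟨0, hK⟩, ⟨0, hK⟩, ⟨0, gridSize_pos hl0⟩⟩
  have hcoord (r : Fin K × Fin K × Fin L) (i : MonomialIndex S) :
      HasCoordinates (2 ^ (4 * (l * K) + 10 * (S * L)))
        (auxCoeff n m 1 r.1 r.2.1 i * (clearedMonomial i : ℂ) ^ (r.2.2 : ℕ)) := by
    refine ((hasCoordinates_clearedMonomial_pow i r.2.2).intCast_mul _).mono ?_
    have hcoeff := abs_auxCoeff_le hl hn hm (p := 1) (B := 1) (by simp) r.1 r.2.1 i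
    have hexp : 2 * l * (r.1 + r.2.1) ≤ 4 * (l * K) := by nlinarith [r.1.2, r.2.1.2]
    rw [pow_add, mul_assoc 10]
    gcongr
    · refine hcoeff.trans ?_
      rw [one_mul]
      gcongr
      norm_num
    · norm_num
    · exact r.2.2.2.le
  obtain ⟨p, hp0, hp, hzero⟩ := exists_int_sum_mul_eq_zero (one_le_pow₀ (by norm_num)) hcoord (by
    rw [card_monomialIndex]
    simpa only [Fintype.card_prod, Fintype.card_fin] using
      twelve_mul_vanishingOrder_sq_mul_gridSize_le)
  refine ⟨p, hp0, fun t u htu => ?_, fun t ht u hu s hs => ?_⟩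
  · calc _ ≤ ∑ _i : MonomialIndex S, (S ^ 3 : ℤ) * 2 ^ (4 * (l * K) + 10 * (S * L)) *
          2 ^ (2 * l * (t + u)) := sum_le_sum fun i _ => abs_auxCoeff_le hl hn hm
            (fun i => by simpa only [card_monomialIndex, Nat.cast_pow] using hp i) t u i
      _ = (S ^ 3 : ℤ) * S ^ 3 * 2 ^ (4 * (l * K) + 10 * (S * L) + 2 * l * (t + u)) := by
        rw [sum_const, card_univ, card_monomialIndex, nsmul_eq_mul, Nat.cast_pow]
        ring
      _ ≤ 2 ^ (3 * l) * 2 ^ (3 * l) * 2 ^ (4 * (l * K) + 10 * (S * L) + 2 * l * (2 * K)) := by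
        gcongr
        · exact_mod_cast exponentBound_pow_three_le hl
        · exact_mod_cast exponentBound_pow_three_le hl
        · norm_num
      _ = 2 ^ coeffBits l := by
        rw [← pow_add, ← pow_add, coeffBits]
        congr 1
        ring
  · have := hzero (⟨t, ht⟩, ⟨u, hu⟩, ⟨s, hs⟩)
    rw [auxValue, ← this]
    refine sum_congr rfl fun i _ => ?_
    simp [auxCoeff, mul_assoc]

lemma eq_zero_of_forall_sum_mul_pow_eq_zero {ι R : Type*} [Fintype ι] [CommRing R] [IsDomain R]
    {w : ι → R} (hw : Function.Injective w) {p : ι → R}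
    (h : ∀ s < Fintype.card ι, ∑ i, p i * w i ^ s = 0) : p = 0 := by
  let e := Fintype.equivFin ι
  have hcomp : p ∘ e.symm = 0 := Matrix.eq_zero_of_forall_pow_sum_mul_pow_eq_zero
    (hw.comp e.symm.injective) fun s =>
      (e.symm.sum_comp fun i => p i * w i ^ (s : ℕ)).trans (h s s.2)
  exact (Equiv.comp_symm_eq e 0 p).1 hcomp

lemma clearedMonomial_injective {S : ℕ} : Function.Injective (clearedMonomial (S := S)) :=
  fun _ _ h => monomialLog_injective (Real.exp_injective (mul_left_cancel₀ (by positivity) h))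

lemma lt_abs_linForm (hl : 1100 ≤ l) (hn : n ≤ 4 * 2 ^ l) (hm : m ≤ 4 * 2 ^ l) :
    (1 / 2) ^ 2 ^ (l - 1) < |linForm n m| := by
  by_contra! hΛ
  have hl0 : 0 < l := by omega
  obtain ⟨p, hp0, hQ, hzero⟩ := exists_auxValue_eq_zero hl hn hm
  have hvanish (j : ℕ) (hj : j ≤ 15) : ∀ t < vanishingOrder l j, ∀ u < vanishingOrder l j,
      ∀ s < gridSize l j, auxValue n m p t u s = 0 := by
    induction j with
    | zero => exact hzero
    | succ j ih =>
      have hdouble : vanishingOrder l j = 2 * vanishingOrder l (j + 1) :=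
        vanishingOrder_eq_two_mul hj
      have horder : vanishingOrder l j ≤ vanishingOrder l 0 := vanishingOrder_antitone j.zero_le
      refine auxValue_eq_zero_of_forall_auxValue_eq_zero (gridSize_pos hl0)
        (vanishingOrder_pos hl0) ?_ (gridSize_mul_vanishingOrder_le_two_pow hl hj)
        (five_mul_gridSize_le hl hj) (fun t u htu => hQ t u (by omega)) hΛ ?_
        (extrapolation_error_le hl hj) (hdouble ▸ ih (by omega))
      · rw [gridSize_succ]
        exact Nat.le_mul_of_pos_left _ (gridGrowth_pos hl0)
      · have := coeffBits_add_le (j := j) hl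
        omega
  refine hp0 (funext fun i => ?_)
  have hp : (fun i => (p i : ℂ)) = 0 := by
    refine eq_zero_of_forall_sum_mul_pow_eq_zero
      (Complex.ofReal_injective.comp clearedMonomial_injective) fun s hs => ?_
    rw [card_monomialIndex] at hs
    have := hvanish 15 le_rfl 0 (vanishingOrder_pos hl0) 0 (vanishingOrder_pos hl0) s
      (hs.trans_le (exponentBound_pow_three_le_gridSize hl))
    simpa [auxValue, auxCoeff] using this
  exact Int.cast_eq_zero.1 (congrFun hp i)

end SmallLinearForm

/-! ### Binet's formula and the linear form -/

section TribonacciBinet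

/-- The error in Binet's formula for `trib`, the contribution of the two conjugates of `τ`. -/
noncomputable def tribError (m : ℕ) : ℝ := trib m - τ ^ m / tribDenom

/-- The quadratic form in two consecutive errors which is multiplied by the norm `τ ^ 2 - τ - 1` of
the complex conjugates of `τ` when the index advances. -/
noncomputable def tribErrorForm (m : ℕ) : ℝ :=
  tribError (m + 1) ^ 2 + (τ - 1) * tribError (m + 1) * tribError m +
    (τ ^ 2 - τ - 1) * tribError m ^ 2

lemma tribError_recurrence (m : ℕ) :
    tribError (m + 2) = -(τ - 1) * tribError (m + 1) - (τ ^ 2 - τ - 1) * tribError m := by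
  have hw : tribDenom ≠ 0 := by linarith [tribDenom_gt]
  induction m with
  | zero =>
    simp only [tribError, trib]
    field_simp
    push_cast
    unfold tribDenom
    linear_combination -tribConst_pow_three
  | succ m ih =>
    have hthree : tribError (m + 3) = tribError (m + 2) + tribError (m + 1) + tribError m := by
      simp only [tribError, trib]
      push_cast
      field_simp
      linear_combination -τ ^ m * tribConst_pow_three
    rw [hthree]
    linear_combination τ * ih - tribError m * tribConst_pow_three

lemma tribErrorForm_succ (m : ℕ) :
    tribErrorForm (m + 1) = (τ ^ 2 - τ - 1) * tribErrorForm m := by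
  rw [tribErrorForm, tribErrorForm, tribError_recurrence]
  ring

lemma tribErrorForm_zero_le : tribErrorForm 0 ≤ 1 / 4 := by
  have hτ := tribConst_gt
  have hτ' := tribConst_lt
  have hw := tribDenom_gt
  have hw' := tribDenom_lt
  have hform : tribErrorForm 0 = (1 - τ * tribDenom⁻¹) ^ 2 -
      (τ - 1) * ((1 - τ * tribDenom⁻¹) * tribDenom⁻¹) + (τ ^ 2 - τ - 1) * tribDenom⁻¹ ^ 2 := by
    simp only [tribErrorForm, tribError, trib]
    push_cast
    ring
  have hc : tribDenom⁻¹ ≤ 0.338 := by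
    rw [inv_le_comm₀ (by linarith) (by norm_num)]
    linarith
  have hc' : 0.333 ≤ tribDenom⁻¹ := by
    rw [le_inv_comm₀ (by norm_num) (by linarith)]
    linarith
  rw [hform]
  set c := tribDenom⁻¹
  have he : 1 - τ * c ≤ 0.41 := by nlinarith
  have he' : 0.35 ≤ 1 - τ * c := by nlinarith
  have hsq : (1 - τ * c) ^ 2 ≤ 0.17 := by nlinarith
  have hcross : 0.09 ≤ (τ - 1) * ((1 - τ * c) * c) := by
    have : 0.115 ≤ (1 - τ * c) * c := by nlinarith
    nlinarith
  have hlast : (τ ^ 2 - τ - 1) * c ^ 2 ≤ 0.12 := by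
    have : c ^ 2 ≤ 0.12 := by nlinarith
    nlinarith [sq_nonneg c]
  linarith

lemma tribErrorForm_le (m : ℕ) : tribErrorForm m ≤ 1 / 4 := by
  induction m with
  | zero => exact tribErrorForm_zero_le
  | succ m ih =>
    have hnorm : 0 < τ ^ 2 - τ - 1 := by nlinarith [tribConst_gt]
    have hnorm' : τ ^ 2 - τ - 1 < 1 := by nlinarith [tribConst_gt, tribConst_lt]
    rw [tribErrorForm_succ]
    nlinarith

lemma abs_tribError_le_one (m : ℕ) : |tribError m| ≤ 1 := by
  have hform := tribErrorForm_le m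
  have hdisc : 1 / 4 ≤ τ ^ 2 - τ - 1 - (τ - 1) ^ 2 / 4 := by nlinarith [tribConst_gt]
  have hsplit : tribErrorForm m = (tribError (m + 1) + (τ - 1) / 2 * tribError m) ^ 2 +
      (τ ^ 2 - τ - 1 - (τ - 1) ^ 2 / 4) * tribError m ^ 2 := by
    rw [tribErrorForm]
    ring
  rw [← sq_le_one_iff_abs_le_one]
  nlinarith [sq_nonneg (tribError (m + 1) + (τ - 1) / 2 * tribError m), sq_nonneg (tribError m)]

end TribonacciBinet

section EqualTerms

variable {n m : ℕ}

lemma abs_le_two_mul_of_abs_exp_sub_one_le {x d : ℝ} (h : |Real.exp x - 1| ≤ d) (hd : d ≤ 1 / 2) :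
    |x| ≤ 2 * d := by
  rw [abs_le] at h ⊢
  have hneg : Real.exp (-x) * Real.exp x = 1 := by
    rw [← Real.exp_add, neg_add_cancel, Real.exp_zero]
  have hexp : Real.exp (-x) ≤ 1 + 2 * d := by nlinarith [Real.exp_pos (-x)]
  constructor <;> linarith [Real.add_one_le_exp x, Real.add_one_le_exp (-x)]

lemma exp_linForm (n m : ℕ) : Real.exp (linForm n m) = φ ^ n / √5 * (tribDenom / τ ^ m) := by
  have hτ := tribConst_pos
  have hsqrt : √5 = 2 * φ - 1 := by
    rw [← Real.goldenRatio_sub_goldenConj]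
    linarith [Real.goldenRatio_add_goldenConj]
  have hfive : (2 * φ - 1) ^ 2 = 5 := by rw [← hsqrt, Real.sq_sqrt (by norm_num)]
  have : 2 * φ - 1 ≠ 0 := by linarith [goldenRatio_gt]
  rw [linForm, Real.exp_sub, Real.exp_add, Real.exp_nat_mul, Real.exp_nat_mul,
    Real.exp_log (by linarith [binetRatio_gt]), Real.exp_log Real.goldenRatio_pos,
    Real.exp_log hτ, hsqrt, binetRatio, ← hfive]
  field_simp

lemma abs_exp_linForm_sub_one_le (h : (Nat.fib n : ℤ) = trib m) :
    |Real.exp (linForm n m) - 1| ≤ 6 * (5 / 9) ^ m := by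
  have hτ := tribConst_pos
  have hw : 0 < tribDenom := by linarith [tribDenom_gt]
  have hfib : φ ^ n / √5 = trib m + ψ ^ n / √5 := by
    rw [← h, Int.cast_natCast, Real.coe_fib_eq]
    ring
  have hconj : |ψ ^ n / √5| ≤ 1 := by
    rw [abs_div, abs_pow, abs_of_pos (by positivity : (0 : ℝ) < √5)]
    refine div_le_one_of_le₀ ((pow_le_one₀ (abs_nonneg _) ?_).trans ?_) (by positivity)
    · exact abs_le.2 ⟨Real.neg_one_lt_goldenConj.le, by linarith [Real.goldenConj_neg]⟩
    · exact Real.one_le_sqrt.2 (by norm_num)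
  have hmain : Real.exp (linForm n m) - 1 =
      (ψ ^ n / √5 + tribError m) * (tribDenom / τ ^ m) := by
    rw [exp_linForm, hfib, tribError]
    field_simp
    ring
  have hdecay : (τ ^ m)⁻¹ ≤ (5 / 9) ^ m := by
    rw [← inv_pow]
    gcongr
    rw [inv_le_comm₀ hτ (by norm_num)]
    linarith [tribConst_gt]
  rw [hmain, abs_mul, abs_of_pos (by positivity : 0 < tribDenom / τ ^ m), div_eq_mul_inv tribDenom]
  calc _ ≤ (1 + 1) * (3 * (5 / 9 : ℝ) ^ m) := by
        gcongr
        · exact (abs_add_le _ _).trans (add_le_add hconj (abs_tribError_le_one m))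
        · exact tribDenom_lt.le
    _ = _ := by ring

lemma abs_linForm_le (hm : 20 ≤ m) (h : (Nat.fib n : ℤ) = trib m) :
    |linForm n m| ≤ 12 * (5 / 9) ^ m := by
  have hpow : (5 / 9 : ℝ) ^ m ≤ (5 / 9) ^ 20 :=
    pow_le_pow_of_le_one (by norm_num) (by norm_num) hm
  have := abs_le_two_mul_of_abs_exp_sub_one_le (abs_exp_linForm_sub_one_le h)
    (by norm_num at hpow ⊢; linarith)
  linarith

lemma trib_le_fib_two_mul : ∀ m, trib m ≤ Nat.fib (2 * m)
  | 0 => by simp [trib]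
  | 1 => by simp [trib]
  | 2 => by decide
  | m + 3 => by
    have h₀ := trib_le_fib_two_mul m
    have h₁ := trib_le_fib_two_mul (m + 1)
    have h₂ := trib_le_fib_two_mul (m + 2)
    have hfib (k : ℕ) : Nat.fib (2 * m + (k + 2)) =
        Nat.fib (2 * m + k) + Nat.fib (2 * m + (k + 1)) := Nat.fib_add_two
    have := hfib 0
    have := hfib 1
    have := hfib 2
    have := hfib 3
    have := hfib 4
    simp only [trib, mul_add, mul_one, Nat.reduceMul, Nat.reduceAdd, add_zero] at *
    omega

lemma le_two_mul_of_fib_eq_trib (hm : 1 ≤ m) (h : (Nat.fib n : ℤ) = trib m) : n ≤ 2 * m := by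
  by_contra! hn
  have hfib := (Nat.fib_lt_fib (by omega : 2 ≤ 2 * m)).2 hn
  have := trib_le_fib_two_mul m
  omega

set_option exponentiation.threshold 2000 in
/-- With `2 ^ l ≤ m < 2 ^ (l + 1)`, the upper bound for the linear form contradicts its lower bound
as soon as `l ≥ 1100`. -/
lemma lt_two_pow_of_fib_eq_trib (h : (Nat.fib n : ℤ) = trib m) : m < 2 ^ 1100 := by
  by_contra! hm
  have : 2 ^ 5 ≤ m := (Nat.pow_le_pow_right two_pos (by norm_num)).trans hm
  have hn := le_two_mul_of_fib_eq_trib (by omega) h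
  set l := Nat.log 2 m
  have hl : 1100 ≤ l := Nat.le_log_of_pow_le one_lt_two hm
  have hle : 2 ^ l ≤ m := Nat.pow_log_le_self 2 (by omega)
  have hlt : m < 2 ^ (l + 1) := Nat.lt_pow_succ_log_self one_lt_two m
  have hlower : (1 / 2 : ℝ) ^ 2 ^ (l - 1) < |linForm n m| :=
    lt_abs_linForm hl (by omega) (by omega)
  set k := 2 ^ (l - 1)
  have hk : 2 * k ≤ m := by rwa [← pow_succ', Nat.sub_add_cancel (by omega)]
  have hk5 : 2 ^ 5 ≤ k := Nat.pow_le_pow_right two_pos (by omega)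
  have htwelve : (12 : ℝ) ≤ (1 + 1 / 2) ^ k := by
    have hbernoulli := one_add_mul_le_pow (a := (1 / 2 : ℝ)) (by norm_num) k
    have : (2 ^ 5 : ℝ) ≤ k := by exact_mod_cast hk5
    linarith
  refine hlower.not_ge ((abs_linForm_le (by omega) h).trans ?_)
  calc 12 * (5 / 9 : ℝ) ^ m ≤ (1 + 1 / 2) ^ k * (5 / 9) ^ (2 * k) :=
        mul_le_mul htwelve (pow_le_pow_of_le_one (by norm_num) (by norm_num) hk) (by positivity)
          (by positivity)
    _ = ((1 + 1 / 2) * (5 / 9) ^ 2) ^ k := by rw [pow_mul, mul_pow]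
    _ ≤ (1 / 2) ^ k := by gcongr; norm_num

end EqualTerms

/-! ### Fixed-point logarithms -/

section FixedPoint

/-- `f n`, arranged so that the kernel evaluates `n` to a numeral before passing it on to `f`; an
accumulator would otherwise grow into an unevaluated term. -/
def applyEvaluated {α : Type*} (n : ℕ) (f : ℕ → α) : α :=
  match n with
  | 0 => f 0
  | k + 1 => f (k + 1)

lemma applyEvaluated_eq {α : Type*} (n : ℕ) (f : ℕ → α) : applyEvaluated n f = f n := by
  cases n <;> rfl

/-- Horner's scheme for `∑ i ∈ range k, x ^ (i + 1) / (i + 1)` with `x = X / P`, in units of `1 / P`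
and rounded down at each step; `acc` holds the part already summed. -/
def logSeries (P X : ℕ) : ℕ → ℕ → ℕ
  | 0, acc => X * acc / P
  | k + 1, acc => applyEvaluated (P / (k + 1) + X * acc / P) (logSeries P X k)

/-- The largest `x < 2 ^ k` with `p (acc + x)`, for a property `p` inherited by smaller numbers,
found bit by bit and added to `acc`. -/
def binarySearch (p : ℕ → Bool) : ℕ → ℕ → ℕ
  | 0, acc => acc
  | k + 1, acc => applyEvaluated (bif p (acc + 2 ^ k) then acc + 2 ^ k else acc) (binarySearch p k)

/-- A lower bound for `-log (U / 2 ^ N)` in units of `1 / 2 ^ N`. -/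
def negLogLower (N U : ℕ) : ℕ := logSeries (2 ^ N) (2 ^ N - U) N 0 - 1

/-- An upper bound for `-log (U / 2 ^ N)` in units of `1 / 2 ^ N`. -/
def negLogUpper (N U : ℕ) : ℕ := logSeries (2 ^ N) (2 ^ N - U) N 0 + 4

variable {P X N U V : ℕ}

lemma cast_lt_cast_div_add_one (a : ℕ) (hP : 0 < P) : (a / P : ℝ) < (a / P : ℕ) + 1 := by
  rw [div_lt_iff₀ (by exact_mod_cast hP)]
  exact_mod_cast Nat.lt_mul_of_div_lt (Nat.lt_succ_self _) hP

lemma mul_div_bounds (hP : 0 < P) (hX : 2 * X ≤ P) {acc : ℕ} {S : ℝ} (hlow : acc ≤ P * S)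
    (hupp : P * S ≤ acc + 4) :
    ((X * acc / P : ℕ) : ℝ) ≤ P * (X / P * S) ∧ P * (X / P * S) ≤ (X * acc / P : ℕ) + 3 := by
  have hP' : (0 : ℝ) < P := by exact_mod_cast hP
  have hx : (X : ℝ) / P ≤ 1 / 2 := by
    have : (2 : ℝ) * X ≤ P := by exact_mod_cast hX
    rw [div_le_iff₀ hP']
    linarith
  have hx0 : 0 ≤ (X : ℝ) / P := by positivity
  have hfloor : ((X * acc / P : ℕ) : ℝ) ≤ X / P * acc := by
    rw [div_mul_eq_mul_div, ← Nat.cast_mul]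
    exact Nat.cast_div_le
  have hceil : X / P * acc < ((X * acc / P : ℕ) : ℝ) + 1 := by
    rw [div_mul_eq_mul_div, ← Nat.cast_mul]
    exact cast_lt_cast_div_add_one _ hP
  rw [mul_left_comm]
  constructor <;> nlinarith

/-- Multiplication by `x ≤ 1 / 2` halves the error, and each step adds at most `2` units to it;
so an error of at most `4` units persists. -/
lemma logSeries_bounds (hP : 0 < P) (hX : 2 * X ≤ P) (k : ℕ) {acc : ℕ} {S : ℝ}
    (hlow : acc ≤ P * S) (hupp : P * S ≤ acc + 4) :
    (logSeries P X k acc : ℝ) ≤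
        P * (∑ i ∈ range k, (X / P : ℝ) ^ (i + 1) / (i + 1) + (X / P) ^ (k + 1) * S) ∧
      P * (∑ i ∈ range k, (X / P : ℝ) ^ (i + 1) / (i + 1) + (X / P) ^ (k + 1) * S) ≤
        logSeries P X k acc + 3 := by
  induction k generalizing acc S with
  | zero => simpa [logSeries] using mul_div_bounds hP hX hlow hupp
  | succ k ih =>
    obtain ⟨hlow', hupp'⟩ := mul_div_bounds hP hX hlow hupp
    have hfloor : ((P / (k + 1) : ℕ) : ℝ) ≤ P / (k + 1) := by
      exact_mod_cast Nat.cast_div_le (α := ℝ) (m := P) (n := k + 1)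
    have hceil := cast_lt_cast_div_add_one P (Nat.succ_pos k)
    push_cast at hceil
    have hstep : P * (1 / (k + 1) + X / P * S) = P / (k + 1 : ℝ) + P * (X / P * S) := by ring
    have hsum : ∑ i ∈ range (k + 1), (X / P : ℝ) ^ (i + 1) / (i + 1) + (X / P) ^ (k + 2) * S =
        ∑ i ∈ range k, (X / P : ℝ) ^ (i + 1) / (i + 1) +
          (X / P) ^ (k + 1) * (1 / (k + 1) + X / P * S) := by
      rw [sum_range_succ]
      ring
    rw [hsum, logSeries, applyEvaluated_eq]
    apply ih <;> rw [hstep] <;> push_cast <;> linarith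

lemma abs_two_pow_mul_sum_add_log_le {x : ℝ} (hx : 0 ≤ x) (hx' : x ≤ 1 / 2) (N : ℕ) :
    |2 ^ N * (∑ i ∈ range N, x ^ (i + 1) / (i + 1) + Real.log (1 - x))| ≤ 1 := by
  have hseries := Real.abs_log_sub_add_sum_range_le (by rw [abs_of_nonneg hx]; linarith) N
  rw [abs_of_nonneg hx, le_div_iff₀ (by linarith)] at hseries
  rw [abs_mul, abs_of_pos (by positivity)]
  calc _ ≤ (2 : ℝ) ^ N * (2 * x ^ (N + 1)) := by
        gcongr
        nlinarith [abs_nonneg (∑ i ∈ range N, x ^ (i + 1) / (i + 1) + Real.log (1 - x))]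
    _ = (2 * x) ^ (N + 1) := by ring
    _ ≤ 1 := pow_le_one₀ (by linarith) (by linarith)

lemma negLog_bounds (hU : 2 ^ N ≤ 2 * U) (hU' : U ≤ 2 ^ N) :
    negLogLower N U ≤ 2 ^ N * -Real.log (U / 2 ^ N) ∧
      2 ^ N * -Real.log (U / 2 ^ N) ≤ negLogUpper N U := by
  obtain ⟨hlow, hupp⟩ := logSeries_bounds (P := 2 ^ N) (X := 2 ^ N - U) (by positivity) (by omega)
    N (acc := 0) (S := 0) (by simp) (by simp)
  have hx : ((2 ^ N - U : ℕ) : ℝ) / (2 ^ N : ℕ) = 1 - U / 2 ^ N := by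
    rw [Nat.cast_sub hU']
    push_cast
    field_simp
  rw [hx, mul_zero, add_zero, Nat.cast_pow, Nat.cast_ofNat] at hlow hupp
  have hy : (U : ℝ) / 2 ^ N ≤ 1 := div_le_one_of_le₀ (by exact_mod_cast hU') (by positivity)
  have hy' : 1 / 2 ≤ (U : ℝ) / 2 ^ N := by
    rw [div_le_div_iff₀ two_pos (by positivity), one_mul, mul_comm]
    exact_mod_cast hU
  have htail := abs_two_pow_mul_sum_add_log_le (x := 1 - U / 2 ^ N) (by linarith) (by linarith) N
  rw [sub_sub_cancel, mul_add, abs_le] at htail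
  have hnonneg : 0 ≤ (2 : ℝ) ^ N * -Real.log (U / 2 ^ N) :=
    mul_nonneg (by positivity) (neg_nonneg.2 (Real.log_nonpos (by positivity) hy))
  rw [negLogLower, negLogUpper, Nat.cast_add, Nat.cast_ofNat]
  refine ⟨?_, by linarith⟩
  rcases Nat.eq_zero_or_pos (logSeries (2 ^ N) (2 ^ N - U) N 0) with hzero | hpos
  · simpa only [hzero, zero_tsub, Nat.cast_zero] using hnonneg
  · rw [Nat.cast_pred hpos]
    linarith

lemma mul_log_bounds {x : ℝ} (hU : 2 ^ N ≤ 2 * U) (hV : V ≤ 2 ^ N) (hUx : U ≤ 2 ^ N * x⁻¹)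
    (hxV : 2 ^ N * x⁻¹ ≤ V) :
    negLogLower N V ≤ 2 ^ N * Real.log x ∧ 2 ^ N * Real.log x ≤ negLogUpper N U := by
  have hUV : U ≤ V := by exact_mod_cast hUx.trans hxV
  have hU0 : 0 < (U : ℝ) / 2 ^ N := by
    have : 0 < U := by have := Nat.two_pow_pos N; omega
    positivity
  have hUx' : (U : ℝ) / 2 ^ N ≤ x⁻¹ := by rwa [div_le_iff₀' (by positivity)]
  have hxV' : x⁻¹ ≤ V / 2 ^ N := by rwa [le_div_iff₀' (by positivity)]
  have hlogU := Real.log_le_log hU0 hUx'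
  have hlogV := Real.log_le_log (hU0.trans_le hUx') hxV'
  rw [← neg_neg (Real.log x), ← Real.log_inv]
  constructor
  · refine (negLog_bounds (hU.trans (by omega)) hV).1.trans ?_
    gcongr
  · refine le_trans ?_ (negLog_bounds hU (hUV.trans hV)).2
    gcongr

end FixedPoint

/-! ### Approximations of the three logarithms -/

section Enclosures

variable {P u v w : ℝ}

lemma inv_goldenRatio_sq_add : φ⁻¹ ^ 2 + φ⁻¹ = 1 := by
  rw [inv_goldenRatio_eq]
  linear_combination Real.goldenRatio_sq

lemma le_mul_inv_goldenRatio (hP : 0 < P) (h : u ^ 2 + u * P ≤ P ^ 2) : u ≤ P * φ⁻¹ := by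
  by_contra! hu
  have : 0 < P * φ⁻¹ := by positivity
  nlinarith [inv_goldenRatio_sq_add]

lemma mul_inv_goldenRatio_le (hP : 0 < P) (hu : 0 ≤ u) (h : P ^ 2 ≤ u ^ 2 + u * P) :
    P * φ⁻¹ ≤ u := by
  by_contra! hu'
  nlinarith [inv_goldenRatio_sq_add]

lemma inv_tribConst_pow_three_add : τ⁻¹ ^ 3 + τ⁻¹ ^ 2 + τ⁻¹ = 1 := by
  have := tribConst_pos
  field_simp
  linear_combination -tribConst_pow_three

lemma le_mul_inv_tribConst (hP : 0 < P) (h : v ^ 3 + v ^ 2 * P + v * P ^ 2 ≤ P ^ 3) :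
    v ≤ P * τ⁻¹ := by
  have hτ := inv_pos.2 tribConst_pos
  by_contra! hv
  have hroot : (P * τ⁻¹) ^ 3 + (P * τ⁻¹) ^ 2 * P + P * τ⁻¹ * P ^ 2 = P ^ 3 := by
    linear_combination P ^ 3 * inv_tribConst_pow_three_add
  have : (P * τ⁻¹) ^ 3 + (P * τ⁻¹) ^ 2 * P + P * τ⁻¹ * P ^ 2 < v ^ 3 + v ^ 2 * P + v * P ^ 2 := by
    gcongr
  linarith

lemma mul_inv_tribConst_le (hP : 0 < P) (hv : 0 ≤ v)
    (h : P ^ 3 ≤ v ^ 3 + v ^ 2 * P + v * P ^ 2) : P * τ⁻¹ ≤ v := by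
  by_contra! hv'
  have hroot : (P * τ⁻¹) ^ 3 + (P * τ⁻¹) ^ 2 * P + P * τ⁻¹ * P ^ 2 = P ^ 3 := by
    linear_combination P ^ 3 * inv_tribConst_pow_three_add
  have : v ^ 3 + v ^ 2 * P + v * P ^ 2 < (P * τ⁻¹) ^ 3 + (P * τ⁻¹) ^ 2 * P + P * τ⁻¹ * P ^ 2 := by
    gcongr
  linarith

lemma tribDenom_mul_sq_le (hv : v ≤ P * τ⁻¹) (hPv : P ≤ 2 * v) :
    tribDenom * v ^ 2 ≤ 4 * P * v - P ^ 2 - v ^ 2 := by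
  have hvτ : v * τ ≤ P := by rwa [← div_eq_mul_inv, le_div_iff₀ tribConst_pos] at hv
  unfold tribDenom
  nlinarith

lemma le_tribDenom_mul_sq (hv : P * τ⁻¹ ≤ v) (hv0 : 0 ≤ v) :
    4 * P * v - P ^ 2 - v ^ 2 ≤ tribDenom * v ^ 2 := by
  have hvτ : P ≤ v * τ := by rwa [← div_eq_mul_inv, div_le_iff₀ tribConst_pos] at hv
  have : v * τ ≤ 2 * v := by nlinarith [tribConst_lt]
  unfold tribDenom
  nlinarith

lemma le_mul_inv_binetRatio (hP : 0 < P) (hu : P * φ⁻¹ ≤ u) (hv : v ≤ P * τ⁻¹)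
    (hPv : P ≤ 2 * v) (hw : 0 ≤ w)
    (h : w * ((2 * u + P) * (4 * P * v - P ^ 2 - v ^ 2)) ≤ 5 * P ^ 2 * v ^ 2) :
    w ≤ P * binetRatio⁻¹ := by
  have hβ : 0 < binetRatio := by linarith [binetRatio_gt]
  have hdenom : 0 < tribDenom := by linarith [tribDenom_gt]
  have hgolden : (2 * φ - 1) * P ≤ 2 * u + P := by
    rw [inv_goldenRatio_eq] at hu
    linarith
  have hv0 : 0 < v := by linarith
  have hu0 : 0 ≤ 2 * u + P := le_trans (by nlinarith [goldenRatio_gt]) hgolden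
  rw [← div_eq_mul_inv, le_div_iff₀ hβ]
  refine le_of_mul_le_mul_right ?_ (by positivity : 0 < 5 * P * v ^ 2)
  calc w * binetRatio * (5 * P * v ^ 2)
      = w * ((2 * φ - 1) * P * (tribDenom * v ^ 2)) := by
        rw [binetRatio]
        ring
    _ ≤ w * ((2 * u + P) * (4 * P * v - P ^ 2 - v ^ 2)) := by
        gcongr
        exact tribDenom_mul_sq_le hv hPv
    _ ≤ P * (5 * P * v ^ 2) := by linarith

lemma mul_inv_binetRatio_le (hP : 0 < P) (hu : u ≤ P * φ⁻¹) (hu0 : 0 ≤ u) (hv : P * τ⁻¹ ≤ v)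
    (hw : 0 ≤ w) (h : 5 * P ^ 2 * v ^ 2 ≤ w * ((2 * u + P) * (4 * P * v - P ^ 2 - v ^ 2))) :
    P * binetRatio⁻¹ ≤ w := by
  have hβ : 0 < binetRatio := by linarith [binetRatio_gt]
  have hdenom : 0 < tribDenom := by linarith [tribDenom_gt]
  have hv0 : 0 < v := (mul_pos hP (inv_pos.2 tribConst_pos)).trans_le hv
  have hgolden : 2 * u + P ≤ (2 * φ - 1) * P := by
    rw [inv_goldenRatio_eq] at hu
    linarith
  rw [← div_eq_mul_inv, div_le_iff₀ hβ]
  refine le_of_mul_le_mul_right ?_ (by positivity : 0 < 5 * P * v ^ 2)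
  calc P * (5 * P * v ^ 2) ≤ w * ((2 * u + P) * (4 * P * v - P ^ 2 - v ^ 2)) := by linarith
    _ ≤ w * ((2 * u + P) * (tribDenom * v ^ 2)) := by
        gcongr
        exact le_tribDenom_mul_sq hv hv0.le
    _ ≤ w * ((2 * φ - 1) * P * (tribDenom * v ^ 2)) := by gcongr
    _ = w * binetRatio * (5 * P * v ^ 2) := by
        rw [binetRatio]
        ring

end Enclosures

/-- The number of binary digits of the approximations; it exceeds `2 * 1105` because the products of
the logarithms with `reductionDenom ≥ 2 ^ 1105` are needed to within `1 / 2 ^ 1105`. Irreducible, so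
that no tactic expands `2 ^ precision`. -/
@[irreducible] def precision : ℕ := 2240

/-- The integer part of `2 ^ precision * φ⁻¹`, from the equation `φ⁻¹ ^ 2 + φ⁻¹ = 1`. -/
def invGoldenRatioApprox : ℕ :=
  binarySearch (fun x => x ^ 2 + x * 2 ^ precision ≤ (2 ^ precision) ^ 2) precision 0

/-- The integer part of `2 ^ precision * τ⁻¹`, from the equation `τ⁻¹ ^ 3 + τ⁻¹ ^ 2 + τ⁻¹ = 1`. -/
def invTribConstApprox : ℕ :=
  binarySearch (fun x => x ^ 3 + x ^ 2 * 2 ^ precision + x * (2 ^ precision) ^ 2 ≤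
    (2 ^ precision) ^ 3) precision 0

/-- A lower bound for `2 ^ precision * binetRatio⁻¹`, within `16` of it. -/
def invBinetRatioApprox : ℕ :=
  5 * (2 ^ precision) ^ 2 * invTribConstApprox ^ 2 /
    ((2 * (invGoldenRatioApprox + 1) + 2 ^ precision) * (4 * 2 ^ precision * invTribConstApprox -
      (2 ^ precision) ^ 2 - invTribConstApprox ^ 2))

set_option exponentiation.threshold 4000

lemma invGoldenRatioApprox_certificate :
    invGoldenRatioApprox ^ 2 + invGoldenRatioApprox * 2 ^ precision ≤ (2 ^ precision) ^ 2 ∧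
    (2 ^ precision) ^ 2 ≤
      (invGoldenRatioApprox + 1) ^ 2 + (invGoldenRatioApprox + 1) * 2 ^ precision ∧
    2 ^ precision ≤ 2 * invGoldenRatioApprox ∧ invGoldenRatioApprox + 1 ≤ 2 ^ precision := by
  decide +kernel

lemma invTribConstApprox_certificate :
    invTribConstApprox ^ 3 + invTribConstApprox ^ 2 * 2 ^ precision +
        invTribConstApprox * (2 ^ precision) ^ 2 ≤ (2 ^ precision) ^ 3 ∧
    (2 ^ precision) ^ 3 ≤ (invTribConstApprox + 1) ^ 3 +
      (invTribConstApprox + 1) ^ 2 * 2 ^ precision +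
        (invTribConstApprox + 1) * (2 ^ precision) ^ 2 ∧
    2 ^ precision ≤ 2 * invTribConstApprox ∧ invTribConstApprox + 1 ≤ 2 ^ precision := by
  decide +kernel

lemma invBinetRatioApprox_certificate :
    (invBinetRatioApprox : ℤ) * ((2 * (invGoldenRatioApprox + 1 : ℕ) + 2 ^ precision) *
      (4 * 2 ^ precision * invTribConstApprox - (2 ^ precision) ^ 2 - invTribConstApprox ^ 2)) ≤
      5 * (2 ^ precision) ^ 2 * invTribConstApprox ^ 2 ∧
    (5 : ℤ) * (2 ^ precision) ^ 2 * (invTribConstApprox + 1 : ℕ) ^ 2 ≤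
      (invBinetRatioApprox + 16 : ℕ) * ((2 * invGoldenRatioApprox + 2 ^ precision) *
        (4 * 2 ^ precision * (invTribConstApprox + 1 : ℕ) - (2 ^ precision) ^ 2 -
          (invTribConstApprox + 1 : ℕ) ^ 2)) ∧
    2 ^ precision ≤ 2 * invBinetRatioApprox ∧ invBinetRatioApprox + 16 ≤ 2 ^ precision := by
  decide +kernel

/-- A lower bound for `2 ^ precision * log φ`. -/
def logGoldenRatioLower : ℕ := negLogLower precision (invGoldenRatioApprox + 1)

/-- An upper bound for `2 ^ precision * log φ`. -/
def logGoldenRatioUpper : ℕ := negLogUpper precision invGoldenRatioApprox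

/-- A lower bound for `2 ^ precision * log τ`. -/
def logTribConstLower : ℕ := negLogLower precision (invTribConstApprox + 1)

/-- An upper bound for `2 ^ precision * log τ`. -/
def logTribConstUpper : ℕ := negLogUpper precision invTribConstApprox

/-- A lower bound for `2 ^ precision * log binetRatio`. -/
def logBinetRatioLower : ℕ := negLogLower precision (invBinetRatioApprox + 16)

/-- An upper bound for `2 ^ precision * log binetRatio`. -/
def logBinetRatioUpper : ℕ := negLogUpper precision invBinetRatioApprox

lemma mul_inv_goldenRatio_bounds : invGoldenRatioApprox ≤ 2 ^ precision * φ⁻¹ ∧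
    2 ^ precision * φ⁻¹ ≤ (invGoldenRatioApprox + 1 : ℕ) := by
  obtain ⟨hlow, hupp, -, -⟩ := invGoldenRatioApprox_certificate
  exact ⟨le_mul_inv_goldenRatio (by positivity) (by exact_mod_cast hlow),
    mul_inv_goldenRatio_le (by positivity) (by positivity) (by exact_mod_cast hupp)⟩

lemma mul_inv_tribConst_bounds : invTribConstApprox ≤ 2 ^ precision * τ⁻¹ ∧
    2 ^ precision * τ⁻¹ ≤ (invTribConstApprox + 1 : ℕ) := by
  obtain ⟨hlow, hupp, -, -⟩ := invTribConstApprox_certificate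
  exact ⟨le_mul_inv_tribConst (by positivity) (by exact_mod_cast hlow),
    mul_inv_tribConst_le (by positivity) (by positivity) (by exact_mod_cast hupp)⟩

lemma mul_inv_binetRatio_bounds : invBinetRatioApprox ≤ 2 ^ precision * binetRatio⁻¹ ∧
    2 ^ precision * binetRatio⁻¹ ≤ (invBinetRatioApprox + 16 : ℕ) := by
  obtain ⟨hlow, hupp, -, -⟩ := invBinetRatioApprox_certificate
  obtain ⟨hφlow, hφupp⟩ := mul_inv_goldenRatio_bounds
  obtain ⟨hτlow, hτupp⟩ := mul_inv_tribConst_bounds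
  have hτ : (2 : ℝ) ^ precision ≤ 2 * invTribConstApprox := by
    exact_mod_cast invTribConstApprox_certificate.2.2.1
  exact ⟨le_mul_inv_binetRatio (by positivity) hφupp hτlow hτ (by positivity)
      (by exact_mod_cast hlow),
    mul_inv_binetRatio_le (by positivity) hφlow (by positivity) hτupp (by positivity)
      (by exact_mod_cast hupp)⟩

lemma log_goldenRatio_bounds : logGoldenRatioLower ≤ 2 ^ precision * Real.log φ ∧
    2 ^ precision * Real.log φ ≤ logGoldenRatioUpper :=
  mul_log_bounds invGoldenRatioApprox_certificate.2.2.1 invGoldenRatioApprox_certificate.2.2.2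
    mul_inv_goldenRatio_bounds.1 mul_inv_goldenRatio_bounds.2

lemma log_tribConst_bounds : logTribConstLower ≤ 2 ^ precision * Real.log τ ∧
    2 ^ precision * Real.log τ ≤ logTribConstUpper :=
  mul_log_bounds invTribConstApprox_certificate.2.2.1 invTribConstApprox_certificate.2.2.2
    mul_inv_tribConst_bounds.1 mul_inv_tribConst_bounds.2

lemma log_binetRatio_bounds : logBinetRatioLower ≤ 2 ^ precision * Real.log binetRatio ∧
    2 ^ precision * Real.log binetRatio ≤ logBinetRatioUpper :=
  mul_log_bounds invBinetRatioApprox_certificate.2.2.1 invBinetRatioApprox_certificate.2.2.2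
    mul_inv_binetRatio_bounds.1 mul_inv_binetRatio_bounds.2

/-! ### Baker–Davenport reduction -/

lemma baker_davenport {x y z δ : ℝ} {q p r N n m : ℕ} (hy : 0 ≤ y) (hlow : r * y + δ ≤ q * z)
    (hupp : q * z + δ ≤ (r + 1) * y) (hqp : N * |q * x - p * y| ≤ δ / 2) (hn : n ≤ N) :
    δ / 2 ≤ q * |z + n * x - m * y| := by
  have hsmall : |n * (q * x - p * y)| ≤ δ / 2 := by
    rw [abs_mul, Nat.abs_cast]
    exact le_trans (by gcongr) hqp
  have hfar (k : ℤ) : δ ≤ |q * z + k * y| := by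
    rcases le_or_gt (-(r : ℤ)) k with hk | hk
    · have : (-r : ℝ) ≤ k := by exact_mod_cast hk
      exact le_trans (by nlinarith) (le_abs_self _)
    · have : (k : ℝ) ≤ -r - 1 := by exact_mod_cast (by omega : k ≤ -(r : ℤ) - 1)
      exact le_trans (by nlinarith) (neg_le_abs _)
  have hdecomp : q * (z + n * x - m * y) =
      q * z + (n * p - m * q : ℤ) * y + n * (q * x - p * y) := by
    push_cast
    ring
  have habs : q * |z + n * x - m * y| = |q * (z + n * x - m * y)| := by rw [abs_mul, Nat.abs_cast]
  rw [habs, hdecomp]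
  linarith [hfar (n * p - m * q), abs_sub_abs_le_abs_add (q * z + (n * p - m * q : ℤ) * y)
    (n * (q * x - p * y))]

/-- The first denominator `q ≥ B` of a convergent to `a / b`, by at most `k` steps of Euclid's
algorithm; `q'` and `q` are the two latest denominators. -/
def convergentDenom (B : ℕ) : ℕ → ℕ → ℕ → ℕ → ℕ → ℕ
  | 0, _, _, _, q => q
  | k + 1, a, b, q', q => bif B.ble q then q else
      applyEvaluated (a % b) fun c =>
        applyEvaluated (q * (a / b) + q') fun q'' => convergentDenom B k b c q q''

/-- The denominator of a convergent to `log φ / log τ`, at least `16` times the bound `2 ^ 1101` for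
`n`. -/
def reductionDenom : ℕ :=
  convergentDenom (2 ^ 1105) 1000 logGoldenRatioLower logTribConstLower 1 0

/-- The numerator belonging to `reductionDenom`. -/
def reductionNum : ℕ :=
  (2 * reductionDenom * logGoldenRatioLower + logTribConstLower) / (2 * logTribConstLower)

/-- The integer part of `reductionDenom * log binetRatio / log τ`. -/
def reductionQuotient : ℕ := reductionDenom * logBinetRatioLower / logTribConstLower

lemma reductionDenom_certificate :
    2 ^ 1105 * (reductionDenom * logGoldenRatioUpper) ≤
      2 ^ precision + 2 ^ 1105 * (reductionNum * logTribConstLower) ∧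
    2 ^ 1105 * (reductionNum * logTribConstUpper) ≤
      2 ^ precision + 2 ^ 1105 * (reductionDenom * logGoldenRatioLower) ∧
    192 * reductionDenom * 5 ^ 1320 < 9 ^ 1320 := by
  decide +kernel

lemma reductionQuotient_certificate :
    8 * (reductionQuotient * logTribConstUpper) + 2 ^ precision ≤
      8 * (reductionDenom * logBinetRatioLower) ∧
    8 * (reductionDenom * logBinetRatioUpper) + 2 ^ precision ≤
      8 * ((reductionQuotient + 1) * logTribConstLower) := by
  decide +kernel

lemma mul_abs_log_sub_log_le :
    2 ^ 1105 * |reductionDenom * (2 ^ precision * Real.log φ) -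
      reductionNum * (2 ^ precision * Real.log τ)| ≤ 2 ^ precision := by
  obtain ⟨hφlow, hφupp⟩ := log_goldenRatio_bounds
  obtain ⟨hτlow, hτupp⟩ := log_tribConst_bounds
  have hpos : (2 ^ 1105 * (reductionDenom * logGoldenRatioUpper) : ℝ) ≤
      2 ^ precision + 2 ^ 1105 * (reductionNum * logTribConstLower) := by
    exact_mod_cast reductionDenom_certificate.1
  have hneg : (2 ^ 1105 * (reductionNum * logTribConstUpper) : ℝ) ≤
      2 ^ precision + 2 ^ 1105 * (reductionDenom * logGoldenRatioLower) := by
    exact_mod_cast reductionDenom_certificate.2.1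
  rw [← le_div_iff₀' (by positivity), abs_sub_le_iff, le_div_iff₀' (by positivity),
    le_div_iff₀' (by positivity), mul_sub, mul_sub, sub_le_iff_le_add, sub_le_iff_le_add]
  constructor
  · refine le_trans ?_ (hpos.trans ?_) <;> gcongr
  · refine le_trans ?_ (hneg.trans ?_) <;> gcongr

lemma le_mul_abs_linForm {n m : ℕ} (hn : n ≤ 2 ^ 1101) :
    1 / 16 ≤ reductionDenom * |linForm n m| := by
  have hP : (0 : ℝ) < 2 ^ precision := by positivity
  obtain ⟨hτlow, hτupp⟩ := log_tribConst_bounds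
  obtain ⟨hβlow, hβupp⟩ := log_binetRatio_bounds
  have hlow : (8 * (reductionQuotient * logTribConstUpper) + 2 ^ precision : ℝ) ≤
      8 * (reductionDenom * logBinetRatioLower) := by
    exact_mod_cast reductionQuotient_certificate.1
  have hupp : (8 * (reductionDenom * logBinetRatioUpper) + 2 ^ precision : ℝ) ≤
      8 * ((reductionQuotient + 1) * logTribConstLower) := by
    exact_mod_cast reductionQuotient_certificate.2
  have hbound := baker_davenport (x := 2 ^ precision * Real.log φ)
    (y := 2 ^ precision * Real.log τ) (z := 2 ^ precision * Real.log binetRatio)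
    (δ := 2 ^ precision / 8) (q := reductionDenom) (p := reductionNum) (r := reductionQuotient)
    (m := m) (hτlow.trans' (by positivity)) ?_ ?_ ?_ hn
  · rw [show 2 ^ precision * Real.log binetRatio + n * (2 ^ precision * Real.log φ) -
      m * (2 ^ precision * Real.log τ) = 2 ^ precision * linForm n m by rw [linForm]; ring,
      abs_mul, abs_of_pos hP] at hbound
    refine le_of_mul_le_mul_left ?_ hP
    linarith
  · have : (reductionQuotient * (2 ^ precision * Real.log τ) : ℝ) ≤
      reductionQuotient * logTribConstUpper := by gcongr
    have : (reductionDenom * logBinetRatioLower : ℝ) ≤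
      reductionDenom * (2 ^ precision * Real.log binetRatio) := by gcongr
    linarith
  · have : (reductionDenom * (2 ^ precision * Real.log binetRatio) : ℝ) ≤
      reductionDenom * logBinetRatioUpper := by gcongr
    have : ((reductionQuotient + 1) * logTribConstLower : ℝ) ≤
      (reductionQuotient + 1) * (2 ^ precision * Real.log τ) := by gcongr
    linarith
  · have hscale : (2 : ℝ) ^ 1105 = 16 * 2 ^ 1101 := by norm_num
    have := mul_abs_log_sub_log_le
    rw [hscale] at this
    rw [Nat.cast_pow, Nat.cast_ofNat]
    linarith

lemma lt_of_fib_eq_trib {n m : ℕ} (h : (Nat.fib n : ℤ) = trib m) : m < 1320 := by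
  by_contra! hm
  have hm' := lt_two_pow_of_fib_eq_trib h
  have hn := le_two_mul_of_fib_eq_trib (by omega) h
  have hlower := le_mul_abs_linForm (n := n) (m := m) (by rw [pow_succ]; omega)
  have hupper : |linForm n m| ≤ 12 * (5 / 9) ^ 1320 :=
    (abs_linForm_le (by omega) h).trans (mul_le_mul_of_nonneg_left
      (pow_le_pow_of_le_one (by norm_num) (by norm_num) hm) (by norm_num))
  have hdenom : (192 * reductionDenom * 5 ^ 1320 : ℝ) < 9 ^ 1320 := by
    exact_mod_cast reductionDenom_certificate.2.2
  have hdecay : reductionDenom * (12 * (5 / 9 : ℝ) ^ 1320) < 1 / 16 := by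
    rw [div_pow, ← mul_div_assoc, ← mul_div_assoc, div_lt_div_iff₀ (by positivity) (by norm_num)]
    linarith
  exact (hlower.trans (by gcongr)).not_gt hdecay

/-! ### The remaining indices -/

section SmallIndices

variable {n m : ℕ}

lemma trib_nonneg : ∀ m, 0 ≤ trib m
  | 0 => le_rfl
  | 1 => zero_le_one
  | 2 => zero_le_one
  | m + 3 => add_nonneg (add_nonneg (trib_nonneg (m + 2)) (trib_nonneg (m + 1))) (trib_nonneg m)

lemma trib_monotone : Monotone trib := by
  refine monotone_nat_of_le_succ fun m => ?_
  match m with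
  | 0 => simp [trib]
  | 1 => simp [trib]
  | m + 2 =>
    rw [trib]
    linarith [trib_nonneg m, trib_nonneg (m + 1)]

lemma toNat_trib_add_three (l : ℕ) : (trib (l + 3)).toNat =
    (trib l).toNat + (trib (l + 1)).toNat + (trib (l + 2)).toNat := by
  have := trib_nonneg l
  have := trib_nonneg (l + 1)
  have := trib_nonneg (l + 2)
  rw [trib]
  omega

/-- Started with `a, b` consecutive Fibonacci numbers and `x, y, z` consecutive Tribonacci numbers,
replaces the smaller of `a` and `x` by its successor `k` times, and reports whether `a` and `x` were
different throughout. -/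
def disjointWalk : ℕ → ℕ → ℕ → ℕ → ℕ → ℕ → Bool
  | 0, _, _, _, _, _ => true
  | k + 1, a, b, x, y, z =>
    if a < x then applyEvaluated (a + b) fun c => disjointWalk k b c x y z
    else if x < a then applyEvaluated (x + y + z) fun w => disjointWalk k a b y z w
    else false

lemma fib_ne_trib_of_disjointWalk {f k l : ℕ} (hwalk : disjointWalk f (Nat.fib k)
      (Nat.fib (k + 1)) (trib l).toNat (trib (l + 1)).toNat (trib (l + 2)).toNat = true)
    (hn : k ≤ n) (hm : l ≤ m) (hf : n + m < k + l + f) : (Nat.fib n : ℤ) ≠ trib m := by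
  induction f generalizing k l with
  | zero => omega
  | succ f ih =>
    intro h
    have hfib := Nat.fib_mono hn
    have htrib := trib_monotone hm
    simp only [disjointWalk, applyEvaluated_eq] at hwalk
    split_ifs at hwalk with hlt hgt
    · have hkn : k ≠ n := by
        rintro rfl
        omega
      rw [← Nat.fib_add_two] at hwalk
      exact ih hwalk (by omega) hm (by omega) h
    · have hlm : l ≠ m := by
        rintro rfl
        omega
      rw [← toNat_trib_add_three] at hwalk
      exact ih hwalk hn (by omega) (by omega) h

lemma disjointWalk_fib_eight_trib_seven : disjointWalk 4000 (Nat.fib 8) (Nat.fib 9)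
    (trib 7).toNat (trib 8).toNat (trib 9).toNat = true := by
  decide +kernel

lemma le_seven_iff_le_six_of_fib_eq_trib (h : (Nat.fib n : ℤ) = trib m) : n ≤ 7 ↔ m ≤ 6 := by
  constructor
  · intro hn
    by_contra! hm
    have hfib : Nat.fib n ≤ 13 := Nat.fib_mono hn
    have htrib : 24 ≤ trib m := trib_monotone hm
    omega
  · intro hm
    by_contra! hn
    have hfib : 21 ≤ Nat.fib n := Nat.fib_mono hn
    have htrib : trib m ≤ 13 := trib_monotone hm
    omega

lemma le_six_of_fib_eq_trib (h : (Nat.fib n : ℤ) = trib m) : m ≤ 6 := by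
  by_contra! hm
  have hn : 8 ≤ n := by
    by_contra! hn
    exact hm.not_ge ((le_seven_iff_le_six_of_fib_eq_trib h).1 (by omega))
  have hm' := lt_of_fib_eq_trib h
  have hnm := le_two_mul_of_fib_eq_trib (by omega) h
  exact fib_ne_trib_of_disjointWalk disjointWalk_fib_eight_trib_seven hn hm (by omega) h

end SmallIndices

/-- The only representations of `0` as `F n - T m` with `n, m ≥ 2` are
`(n, m) ∈ {(2,2), (3,3), (7,6)}`. -/
theorem fib_sub_trib_eq_zero :
    {p : ℕ × ℕ | 2 ≤ p.1 ∧ 2 ≤ p.2 ∧ (Nat.fib p.1 : ℤ) - trib p.2 = 0} =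
      ({(2, 2), (3, 3), (7, 6)} : Set (ℕ × ℕ)) := by
  ext ⟨n, m⟩
  simp only [Set.mem_ofPred_eq, Set.mem_insert_iff, Set.mem_singleton_iff, Prod.mk.injEq]
  constructor
  · rintro ⟨hn, hm, h⟩
    rw [sub_eq_zero] at h
    have hm' := le_six_of_fib_eq_trib h
    have hn' := (le_seven_iff_le_six_of_fib_eq_trib h).2 hm'
    interval_cases n <;> interval_cases m <;> revert h <;> decide
  · rintro (⟨rfl, rfl⟩ | ⟨rfl, rfl⟩ | ⟨rfl, rfl⟩) <;> decide
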